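/- Let n ≥ 1 and N = (N_0, …, N_n) ∈ ℤ^{n+1} with N_0 + ⋯ + N_n = 0 be such that the flow polytope F_n(N) is nonempty. Then sup_{f ∈ F_n(N)} e^{H(f)} ≥ K_n(N) ≥ (max_{0 ≤ k ≤ n−1} e^{h(s_k)}) / (∏_{k=0}^{n−1} e^{h(s_k)})² · sup_{f ∈ F_n(N)} e^{H(f)}. -/

import Mathlib

open Finset

/-- The entropy-like function `h(t) = (t+1)·log(t+1) − t·log t` (with `h 0 = 0`
since `Real.log 0 = 0`). -/
noncomputable def entH (t : ℝ) : ℝ := (t + 1) * Real.log (t + 1) - t * Real.log t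

/-- `f` is an integer flow on the complete graph `k_{n+1}` with netflow `N`:
`f i j` is the flow on the edge `(i,j)` for `i < j`, it vanishes for `i ≥ j`,
and the netflow at each vertex `i` is `N i`. -/
def IsIntFlow (n : ℕ) (N : Fin (n + 1) → ℤ) (f : Fin (n + 1) → Fin (n + 1) → ℕ) : Prop :=
  (∀ i j : Fin (n + 1), ¬ i < j → f i j = 0) ∧
  ∀ i : Fin (n + 1),
    (∑ j : Fin (n + 1), if i < j then (f i j : ℤ) else 0) -
      (∑ k : Fin (n + 1), if k < i then (f k i : ℤ) else 0) = N i

/-- The Kostant partition function: the number of integer flows on the complete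
graph `k_{n+1}` with netflow `N`. -/
noncomputable def Kn (n : ℕ) (N : Fin (n + 1) → ℤ) : ℕ :=
  Nat.card {f : Fin (n + 1) → Fin (n + 1) → ℕ // IsIntFlow n N f}

/-- The flow polytope of the complete graph `k_{n+1}` with netflow `N`. -/
def FlowPolytope (n : ℕ) (N : Fin (n + 1) → ℝ) : Set (Fin (n + 1) → Fin (n + 1) → ℝ) :=
  {f | (∀ i j : Fin (n + 1), i < j → 0 ≤ f i j) ∧
    (∀ i j : Fin (n + 1), ¬ i < j → f i j = 0) ∧
    ∀ i : Fin (n + 1),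
      (∑ j : Fin (n + 1), if i < j then f i j else 0) -
        (∑ k : Fin (n + 1), if k < i then f k i else 0) = N i}

/-- The flow entropy `H(f)`. -/
noncomputable def flowEntropy (n : ℕ) (N : Fin (n + 1) → ℝ)
    (f : Fin (n + 1) → Fin (n + 1) → ℝ) : ℝ :=
  (∑ i : Fin (n + 1), ∑ j : Fin (n + 1), if i < j then entH (f i j) else 0) +
  ∑ j : Fin (n + 1), if 0 < (j : ℕ) ∧ (j : ℕ) < n then
    entH (∑ i : Fin (n + 1), if i < j then (N i - f i j) else 0) else 0

/-- Partial sums `s_k = N_0 + ⋯ + N_k`. -/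
def sPartial (n : ℕ) (N : Fin (n + 1) → ℤ) (k : ℕ) : ℤ :=
  ∑ j : Fin (n + 1), if (j : ℕ) ≤ k then N j else 0

/-- Extend `(N_0,…,N_{n−1})` to the netflow vector `(N_0,…,N_{n−1},−∑ N_i)`. -/
def extend (n : ℕ) (N : Fin n → ℤ) : Fin (n + 1) → ℤ := Fin.snoc N (-∑ i, N i)


theorem cs_two {X E p q d g : ℝ} (hp : 0 < p) (hq : 0 ≤ q) (hE : 0 ≤ E)
    (h1 : d ^ 2 ≤ X * p) (h2 : g ^ 2 ≤ E * q) : (g + d) ^ 2 ≤ (X + E) * (p + q) := by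
  have hX : 0 ≤ X := by
    by_contra h
    push Not at h
    nlinarith [sq_nonneg d, mul_neg_of_neg_of_pos h hp]
  have h3 : (g * d) ^ 2 ≤ (E * q) * (X * p) := by
    rw [mul_pow]
    exact mul_le_mul h2 h1 (sq_nonneg _) (by positivity)
  have h4 : (2 * (g * d)) ^ 2 ≤ (X * q + E * p) ^ 2 := by
    nlinarith [sq_nonneg (X * q - E * p)]
  have h5 := abs_le_of_sq_le_sq h4 (by positivity)
  nlinarith [(abs_le.1 h5).2]

theorem bl_real {a S a0 a1 X E g d : ℝ} (ha : 0 < a) (hS : 0 < S) (ha0 : 0 < a0)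
    (hlc : a * a1 ≤ a0 ^ 2) (hE : 0 ≤ E) (hD : 0 < a0 / S - 1 + a1 / a0)
    (h1 : a0 * d ^ 2 ≤ X * (a0 / S - 1 + a1 / a0))
    (h2 : a * g ^ 2 * a0 ^ 2 ≤ E * (a0 ^ 2 - a * a1)) :
    0 < a / (S + a) - 1 + a0 / a ∧
    a * (S / (S + a) * (g + d)) ^ 2 ≤
      (X + E - a * S / (S + a) * (g + d) ^ 2) * (a / (S + a) - 1 + a0 / a) := by
  set p := (a0 / S - 1 + a1 / a0) / a0 with hpdef
  set q := (a0 ^ 2 - a * a1) / (a * a0 ^ 2) with hqdef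
  have hp : 0 < p := by positivity
  have hq : 0 ≤ q := div_nonneg (by linarith) (by positivity)
  have h1' : d ^ 2 ≤ X * p := by
    rw [hpdef, ← mul_div_assoc, le_div_iff₀ ha0]; linarith
  have h2' : g ^ 2 ≤ E * q := by
    rw [hqdef, ← mul_div_assoc, le_div_iff₀ (by positivity)]; linarith
  have h := cs_two hp hq hE h1' h2'
  have hpq : a / (S + a) - 1 + a0 / a = S * a0 / (S + a) * (p + q) := by
    rw [hpdef, hqdef]; field_simp; ring
  have hk : 0 < S * a0 / (S + a) := by positivity
  refine ⟨by rw [hpq]; positivity, ?_⟩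
  have key : a * (S / (S + a) * (g + d)) ^ 2 +
      a * S / (S + a) * (g + d) ^ 2 * (a / (S + a) - 1 + a0 / a) =
      S * a0 / (S + a) * (g + d) ^ 2 := by
    field_simp; ring
  have := mul_le_mul_of_nonneg_left h hk.le
  rw [sub_mul, le_sub_iff_add_le, key, hpq]
  linarith

theorem bl (K : ℕ) : ∀ (a r E : ℕ → ℝ), (∀ k, 0 < a k) →
    (∀ k, a k * a (k + 2) ≤ a (k + 1) ^ 2) → (∀ k, 0 ≤ E k) →
    (∀ k, a k * (r (k + 1) - r k) ^ 2 * a (k + 1) ^ 2 ≤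
      E k * (a (k + 1) ^ 2 - a k * a (k + 2))) →
    0 < a 0 / (∑ k ∈ range (K + 1), a k) - 1 + a 1 / a 0 ∧
    a 0 * ((∑ k ∈ range (K + 1), a k * r k) / (∑ k ∈ range (K + 1), a k) - r 0) ^ 2 ≤
      ((∑ k ∈ range (K + 1), E k) - ((∑ k ∈ range (K + 1), a k * r k ^ 2) -
        (∑ k ∈ range (K + 1), a k * r k) ^ 2 / (∑ k ∈ range (K + 1), a k))) *
      (a 0 / (∑ k ∈ range (K + 1), a k) - 1 + a 1 / a 0) := by
  induction K with
  | zero =>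
    intro a r E ha hlc hE hc
    have h0 := ha 0
    have h1 := ha 1
    have hE0 := hE 0
    simp only [zero_add, sum_range_one]
    have e1 : a 0 * r 0 / a 0 - r 0 = 0 := by field_simp; ring
    have e2 : a 0 * r 0 ^ 2 - (a 0 * r 0) ^ 2 / a 0 = 0 := by field_simp; ring
    have e3 : a 0 / a 0 - 1 + a 1 / a 0 = a 1 / a 0 := by field_simp; ring
    rw [e1, e2, e3]
    refine ⟨by positivity, ?_⟩
    simp only [ne_eq, OfNat.ofNat_ne_zero, not_false_eq_true, zero_pow, mul_zero, sub_zero]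
    positivity
  | succ K ih =>
    intro a r E ha hlc hE hc
    obtain ⟨hD, h⟩ := ih (fun k => a (k + 1)) (fun k => r (k + 1)) (fun k => E (k + 1))
      (fun k => ha _) (fun k => hlc _) (fun k => hE _) (fun k => hc _)
    simp only [zero_add] at hD h
    have hSpos : 0 < ∑ k ∈ range (K + 1), a (k + 1) :=
      sum_pos (fun k _ => ha _) ⟨0, by simp⟩
    rw [sum_range_succ' a (K + 1), sum_range_succ' (fun k => a k * r k) (K + 1),
      sum_range_succ' (fun k => a k * r k ^ 2) (K + 1), sum_range_succ' E (K + 1)]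
    set S := ∑ k ∈ range (K + 1), a (k + 1)
    set T := ∑ k ∈ range (K + 1), a (k + 1) * r (k + 1)
    set Q := ∑ k ∈ range (K + 1), a (k + 1) * r (k + 1) ^ 2
    set F := ∑ k ∈ range (K + 1), E (k + 1)
    have h0 := ha 0
    have := bl_real (g := r 1 - r 0) (ha 0) hSpos (ha 1) (hlc 0) (hE 0) hD h (hc 0)
    refine ⟨this.1, ?_⟩
    have e1 : (T + a 0 * r 0) / (S + a 0) - r 0 =
        S / (S + a 0) * (r 1 - r 0 + (T / S - r 1)) := by
      field_simp; ring
    have e2 : F + E 0 - (Q + a 0 * r 0 ^ 2 - (T + a 0 * r 0) ^ 2 / (S + a 0)) =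
        F - (Q - T ^ 2 / S) + E 0 -
          a 0 * S / (S + a 0) * (r 1 - r 0 + (T / S - r 1)) ^ 2 := by
      field_simp; ring
    rw [e1, e2]
    exact this.2

theorem bl_final (K : ℕ) (a r E : ℕ → ℝ) (ha : ∀ k, 0 < a k)
    (hlc : ∀ k, a k * a (k + 2) ≤ a (k + 1) ^ 2) (hE : ∀ k, 0 ≤ E k)
    (hc : ∀ k, a k * (r (k + 1) - r k) ^ 2 * a (k + 1) ^ 2 ≤
      E k * (a (k + 1) ^ 2 - a k * a (k + 2)))
    (hT : ∑ k ∈ range (K + 1), a k * r k = 0) :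
    ∑ k ∈ range (K + 1), (a k * r k ^ 2 - E k) ≤ 0 := by
  obtain ⟨hD, h⟩ := bl K a r E ha hlc hE hc
  rw [hT] at h
  rw [sum_sub_distrib]
  have h1 := ha 0
  have : 0 ≤ a 0 * (0 / (∑ k ∈ range (K + 1), a k) - r 0) ^ 2 := by positivity
  have h3 := nonneg_of_mul_nonneg_left (this.trans h) hD
  simp at h3
  linarith

/-- Reversed Cauchy-Schwarz: the form has at most one positive direction. -/
def Hyp {V : Type*} [AddCommGroup V] [Module ℝ V] (A : LinearMap.BilinForm ℝ V) : Prop :=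
  (∀ x y, A x y = A y x) ∧ ∀ x v, 0 < A v v → A x x * A v v ≤ (A x v) ^ 2

theorem hyp_of_ker {V : Type*} [AddCommGroup V] [Module ℝ V] (A : LinearMap.BilinForm ℝ V)
    (hs : ∀ x y, A x y = A y x) (l : V →ₗ[ℝ] ℝ) (h : ∀ z, l z = 0 → A z z ≤ 0) : Hyp A := by
  refine ⟨hs, fun x v hv => ?_⟩
  have hlv : l v ≠ 0 := fun h0 => absurd (h v h0) (not_le.2 hv)
  have hz := h (l v • x - l x • v) (by simp; ring)
  simp only [map_sub, map_smul, LinearMap.sub_apply, LinearMap.smul_apply, smul_eq_mul] at hz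
  rw [hs v x] at hz
  by_contra hc
  push Not at hc
  have h2 : 0 < l v ^ 2 * (A x x * A v v - A x v ^ 2) := mul_pos (by positivity) (by linarith)
  have h3 := mul_nonpos_of_nonneg_of_nonpos hv.le hz
  nlinarith [sq_nonneg (l x * A v v - l v * A x v)]

theorem hyp_three {V : Type*} [AddCommGroup V] [Module ℝ V] {A : LinearMap.BilinForm ℝ V}
    (hA : Hyp A) (x u v : V) (hu : 0 < A u u) :
    (A x v * A u u - A x u * A u v) ^ 2 ≤
      ((A x u) ^ 2 - A x x * A u u) * ((A u v) ^ 2 - A v v * A u u) := by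
  have key : ∀ s : ℝ, 0 ≤ ((A u v) ^ 2 - A v v * A u u) * (s * s) +
      (2 * (A x u * A u v - A x v * A u u)) * s + ((A x u) ^ 2 - A x x * A u u) := by
    intro s
    have := hA.2 (x + s • v) u hu
    simp only [map_add, map_smul, LinearMap.add_apply, LinearMap.smul_apply, smul_eq_mul] at this
    rw [hA.1 v x, hA.1 v u] at this
    nlinarith
  have := discrim_le_zero key
  unfold discrim at this
  nlinarith

theorem hyp_chain {V : Type*} [AddCommGroup V] [Module ℝ V] (A : ℕ → LinearMap.BilinForm ℝ V)
    (hA : ∀ k, Hyp (A k)) (u v : V) (hch : ∀ k, A (k + 1) u = A k v)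
    (hpos : ∀ k, 0 < A k u u) (K : ℕ) : Hyp (∑ k ∈ range (K + 1), A k) := by
  have hs : ∀ x y, (∑ k ∈ range (K + 1), A k) x y = (∑ k ∈ range (K + 1), A k) y x := by
    intro x y
    simp only [LinearMap.sum_apply]
    exact sum_congr rfl fun k _ => (hA k).1 x y
  refine hyp_of_ker _ hs ((∑ k ∈ range (K + 1), A k) u) fun x hx => ?_
  have e1 : ∀ k, A k u v = A (k + 1) u u := fun k => by
    rw [hch k, (hA k).1]
  have e2 : ∀ k, A k v v = A (k + 2) u u := fun k => by
    rw [← hch k, (hA _).1, ← hch (k+1)]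
  have e3 : ∀ k, A k x v = A (k + 1) u x := fun k => by
    rw [hch k, (hA k).1]
  have hthree : ∀ k, (A (k+1) u x * A k u u - A k u x * A (k+1) u u)^2 ≤
      ((A k u x)^2 - A k x x * A k u u) * ((A (k+1) u u)^2 - A (k+2) u u * A k u u) := by
    intro k
    have := hyp_three (hA k) x u v (hpos k)
    rwa [e1, e2, e3, (hA k).1 x u] at this
  have := bl_final K (fun k => A k u u) (fun k => A k u x / A k u u)
    (fun k => (A k u x)^2 / A k u u - A k x x) hpos
    (fun k => by
      by_cases hv : 0 < A k v v
      · have := (hA k).2 u v hv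
        rwa [e1, e2] at this
      · rw [e2] at hv; exact absurd (hpos _) hv)
    (fun k => by
      rw [sub_nonneg, le_div_iff₀ (hpos k)]
      have := (hA k).2 x u (hpos k)
      rwa [(hA k).1 x u] at this)
    (fun k => by
      have h := hthree k
      have h0 := hpos k
      have h1 := hpos (k+1)
      have e : A k u u * (A (k+1) u x / A (k+1) u u - A k u x / A k u u)^2 * (A (k+1) u u)^2 =
          (A (k+1) u x * A k u u - A k u x * A (k+1) u u)^2 / A k u u := by
        field_simp
      rw [e, div_le_iff₀ h0]
      calc _ ≤ _ := h
        _ = _ := by field_simp)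
    (by
      simp only [LinearMap.sum_apply] at hx
      rw [← hx]
      exact sum_congr rfl fun k _ => by have := hpos k; field_simp)
  simp only [LinearMap.sum_apply]
  refine le_trans (le_of_eq ?_) this
  refine sum_congr rfl fun k _ => ?_
  have := hpos k
  field_simp
  ring

/-- The quadratic form attached to a function on a lattice. -/
noncomputable def MF {Λ ι : Type*} [AddCommGroup Λ] [Fintype ι] [DecidableEq ι] (e : ι → Λ)
    (c : Λ → ℝ) (γ : Λ) : LinearMap.BilinForm ℝ (ι → ℝ) :=
  Matrix.toBilin' (Matrix.of fun j k => c (γ + e j + e k))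

theorem MF_apply {Λ ι : Type*} [AddCommGroup Λ] [Fintype ι] [DecidableEq ι] (e : ι → Λ)
    (c : Λ → ℝ) (γ : Λ) (x y : ι → ℝ) :
    MF e c γ x y = ∑ i, ∑ j, x i * c (γ + e i + e j) * y j := by
  simp [MF, Matrix.toBilin'_apply]

theorem MF_single {Λ ι : Type*} [AddCommGroup Λ] [Fintype ι] [DecidableEq ι] (e : ι → Λ)
    (c : Λ → ℝ) (γ : Λ) (i : ι) (y : ι → ℝ) :
    MF e c γ (Pi.single i 1) y = ∑ j, c (γ + e i + e j) * y j := by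
  rw [MF_apply]
  rw [Finset.sum_eq_single i]
  · simp
  · intro b _ hb; simp [hb]
  · simp

theorem MF_single_single {Λ ι : Type*} [AddCommGroup Λ] [Fintype ι] [DecidableEq ι] (e : ι → Λ)
    (c : Λ → ℝ) (γ : Λ) (i j : ι) :
    MF e c γ (Pi.single i 1) (Pi.single j 1) = c (γ + e i + e j) := by
  simp [MF]

theorem MF_symm {Λ ι : Type*} [AddCommGroup Λ] [Fintype ι] [DecidableEq ι] (e : ι → Λ)
    (c : Λ → ℝ) (γ : Λ) (x y : ι → ℝ) : MF e c γ x y = MF e c γ y x := by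
  rw [MF_apply, MF_apply, sum_comm]
  refine sum_congr rfl fun i _ => sum_congr rfl fun j _ => ?_
  rw [add_right_comm]; ring

/-- Positive functions all of whose quadratic forms are hyperbolic. -/
def Cls {Λ ι : Type*} [AddCommGroup Λ] [Fintype ι] [DecidableEq ι] (e : ι → Λ)
    (c : Λ → ℝ) : Prop := (∀ p, 0 < c p) ∧ ∀ γ, Hyp (MF e c γ)

theorem cls_conv {Λ ι : Type*} [AddCommGroup Λ] [Fintype ι] [DecidableEq ι] (e : ι → Λ)
    (c : Λ → ℝ) (hc : Cls e c) (a b : ι) (t : ℝ) (ht : 0 ≤ t) (L : ℕ) :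
    Cls e (fun p => ∑ k ∈ range (L + 1), t ^ k * c (p - k • (e b - e a))) := by
  rcases ht.eq_or_lt with rfl | ht
  · have : (fun p => ∑ k ∈ range (L + 1), (0:ℝ) ^ k * c (p - k • (e b - e a))) = c := by
      funext p
      rw [sum_range_succ']
      simp
    rw [this]; exact hc
  refine ⟨fun p => sum_pos (fun k _ => mul_pos (by positivity) (hc.1 _)) ⟨0, by simp⟩, ?_⟩
  intro γ
  have key := hyp_chain (fun k => t ^ k • MF e c (γ - k • (e b - e a)))
    (fun k => by
      refine ⟨fun x y => by simp [MF_symm e c _ x y], fun x v hv => ?_⟩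
      simp only [LinearMap.smul_apply, smul_eq_mul] at hv ⊢
      have htk : 0 < t ^ k := by positivity
      have := (hc.2 (γ - k • (e b - e a))).2 x v (pos_of_mul_pos_right hv htk.le)
      have h2 := mul_le_mul_of_nonneg_left this (sq_nonneg (t ^ k))
      nlinarith)
    (Pi.single b 1) (t • Pi.single a 1)
    (fun k => by
      refine LinearMap.ext fun x => ?_
      simp only [LinearMap.smul_apply, smul_eq_mul, map_smul, MF_single]
      rw [pow_succ, mul_comm (t ^ k) t, mul_assoc]
      congr 2
      refine sum_congr rfl fun j _ => ?_
      congr 2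
      rw [succ_nsmul]
      abel)
    (fun k => by
      simp only [LinearMap.smul_apply, smul_eq_mul, MF_single_single]
      exact mul_pos (by positivity) (hc.1 _)) L
  convert key using 1
  refine LinearMap.ext₂ fun x y => ?_
  simp only [LinearMap.sum_apply, LinearMap.smul_apply, smul_eq_mul, MF_apply, mul_sum, sum_mul]
  symm
  rw [sum_comm]
  refine sum_congr rfl fun i _ => ?_
  rw [sum_comm]
  refine sum_congr rfl fun j _ => sum_congr rfl fun k _ => ?_
  have : γ - k • (e b - e a) + e i + e j = γ + e i + e j - k • (e b - e a) := by abel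
  rw [this]
  ring

theorem cls_sum {Λ ι : Type*} [AddCommGroup Λ] [Fintype ι] [DecidableEq ι] (e : ι → Λ)
    (θ : Λ → ℝ) (hθ : Cls e θ) (L : ℕ) (E : Type) [Fintype E] [DecidableEq E] :
    ∀ (a b : E → ι) (τ : E → ℝ), (∀ x, 0 ≤ τ x) →
    Cls e (fun p => ∑ B : E → Fin (L + 1), (∏ x, τ x ^ (B x : ℕ)) *
      θ (p - ∑ x, (B x : ℕ) • (e (b x) - e (a x)))) := by
  classical
  have := Fintype.induction_empty_option (P := fun (E : Type) [Fintype E] => ∀ [DecidableEq E],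
    ∀ (a b : E → ι) (τ : E → ℝ), (∀ x, 0 ≤ τ x) →
    Cls e (fun p => ∑ B : E → Fin (L + 1), (∏ x, τ x ^ (B x : ℕ)) *
      θ (p - ∑ x, (B x : ℕ) • (e (b x) - e (a x))))) ?_ ?_ ?_ E
  · exact this
  · intro α β _ f ih _ a b τ hτ
    classical
    let _ := Fintype.ofEquiv _ f.symm
    have := ih (a ∘ f) (b ∘ f) (τ ∘ f) (fun x => hτ _)
    convert this using 1
    funext p
    rw [← Equiv.sum_comp (Equiv.arrowCongr f (Equiv.refl (Fin (L+1))))]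
    refine Fintype.sum_congr _ _ fun B => ?_
    rw [← Equiv.prod_comp f, ← Equiv.sum_comp f]
    simp
  · intro _ a b τ hτ
    convert hθ using 1
    funext p
    simp
  · intro α _ ih _ a b τ hτ
    classical
    have := cls_conv e _ (ih (fun x => a (some x)) (fun x => b (some x)) (fun x => τ (some x))
      (fun x => hτ _)) (a none) (b none) (τ none) (hτ _) L
    convert this using 1
    funext p
    rw [← Equiv.sum_comp (Equiv.piOptionEquivProd (β := fun _ : Option α => Fin (L+1))).symm,
      Fintype.sum_prod_type, Finset.sum_range]
    refine Fintype.sum_congr _ _ fun k => ?_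
    rw [mul_sum]
    refine Fintype.sum_congr _ _ fun B => ?_
    simp [Fintype.prod_option, Fintype.sum_option, Equiv.piOptionEquivProd, mul_assoc, sub_sub]

/-- Basis vectors together with the zero vector. -/
def bvec {W : Type*} [DecidableEq W] : Option W → (W → ℤ)
  | none => 0
  | some w => Pi.single w 1

/-- Discrete Gaussian weight. -/
noncomputable def thq {W : Type*} [Fintype W] (q : ℝ) (p : W → ℤ) : ℝ :=
  q ^ (∑ w, (p w).natAbs ^ 2)

theorem thq_zpow {W : Type*} [Fintype W] (q : ℝ) (p : W → ℤ) :
    thq q p = q ^ (∑ w, p w ^ 2) := by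
  rw [thq, ← zpow_natCast]
  congr 1
  push_cast
  simp

theorem thq_cls {W : Type*} [Fintype W] [DecidableEq W] (q : ℝ) (hq : 0 < q) (hq1 : q < 1) :
    Cls (bvec (W := W)) (thq q) := by
  refine ⟨fun p => by unfold thq; positivity, fun γ => ?_⟩
  let u : Option W → ℝ := fun j => j.elim 1 (fun w => q ^ (2 * γ w + 1))
  let κ : Option W → ℝ := fun j => j.elim 1 (fun _ => q ^ 2)
  have hκ : ∀ j, κ j ≤ 1 := by
    intro j
    cases j with
    | none => simp [κ]
    | some w => simp only [κ, Option.elim]; exact pow_le_one₀ hq.le hq1.le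
  have hfac : ∀ j k, thq q (γ + bvec j + bvec k) =
      thq q γ * (u j * u k) - (if j = k then thq q γ * (u j * u k) * (1 - κ j) else 0) := by
    intro j k
    have hfac' : thq q (γ + bvec j + bvec k) =
      thq q γ * (u j * u k) * (if j = k then κ j else 1) := by
      simp only [thq_zpow]
      rcases j with _ | j <;> rcases k with _ | k
      · simp [bvec, u, κ]
      · simp only [bvec, u, κ, Option.elim, add_zero, one_mul, reduceCtorEq, if_false, mul_one]
        rw [← zpow_add₀ hq.ne']
        congr 1
        have : ∀ x, ((γ + Pi.single k 1 : W → ℤ) x) ^ 2 =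
          γ x ^ 2 + (if x = k then 2 * γ x + 1 else 0) := by
          intro x; by_cases h : x = k <;> simp [Pi.single_apply, h]; ring
        simp only [this, sum_add_distrib]
        simp
      · simp only [bvec, u, κ, Option.elim, add_zero, one_mul, reduceCtorEq, if_false, mul_one]
        rw [← zpow_add₀ hq.ne']
        congr 1
        have : ∀ x, ((γ + Pi.single j 1 : W → ℤ) x) ^ 2 =
          γ x ^ 2 + (if x = j then 2 * γ x + 1 else 0) := by
          intro x; by_cases h : x = j <;> simp [Pi.single_apply, h]; ring
        simp only [this, sum_add_distrib]
        simp
      · simp only [bvec, u, κ, Option.elim]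
        have : ∀ x, ((γ + Pi.single j 1 + Pi.single k 1 : W → ℤ) x) ^ 2 =
          γ x ^ 2 + (if x = j then 2 * γ x + 1 else 0) + (if x = k then 2 * γ x + 1 else 0)
            + (if x = j then (if j = k then 2 else 0) else 0) := by
          intro x; by_cases h : x = j <;> by_cases h' : x = k
          · subst h; subst h'; simp; ring
          · subst h; simp [Pi.single_apply, h']; ring
          · subst h'; simp [Pi.single_apply, h]; ring
          · simp [Pi.single_apply, h, h']
        simp only [this, sum_add_distrib]
        simp only [sum_ite_eq', mem_univ, if_true, Option.some.injEq]
        by_cases h : j = k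
        · simp only [h, if_true]
          rw [zpow_add₀ hq.ne', zpow_add₀ hq.ne', zpow_add₀ hq.ne']
          norm_cast
          ring
        · simp only [h, if_false]
          rw [add_zero, zpow_add₀ hq.ne', zpow_add₀ hq.ne']
          ring
    rw [hfac']
    split_ifs <;> ring
  refine hyp_of_ker _ (MF_symm _ _ _) (∑ j, u j • LinearMap.proj j) fun z hz => ?_
  have hz' : ∑ j, u j * z j = 0 := by simpa [LinearMap.sum_apply] using hz
  rw [MF_apply]
  have : ∑ i, ∑ j, z i * thq q (γ + bvec i + bvec j) * z j =
      thq q γ * ((∑ j, u j * z j) * (∑ j, u j * z j)) -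
        ∑ i, thq q γ * (u i * z i) ^ 2 * (1 - κ i) := by
    rw [Finset.sum_mul_sum, mul_sum, ← sum_sub_distrib]
    refine sum_congr rfl fun i _ => ?_
    have : ∀ j, z i * thq q (γ + bvec i + bvec j) * z j = thq q γ * (u i * z i * (u j * z j)) -
        (if i = j then thq q γ * (u i * z i) ^ 2 * (1 - κ i) else 0) := by
      intro j
      rw [hfac]
      split_ifs with h
      · subst h; ring
      · ring
    simp only [this, sum_sub_distrib, mul_sum]
    simp
  rw [this, hz']
  have : 0 ≤ ∑ i, thq q γ * (u i * z i) ^ 2 * (1 - κ i) :=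
    sum_nonneg fun i _ => mul_nonneg (mul_nonneg (by unfold thq; positivity) (sq_nonneg _))
      (by linarith [hκ i])
  simp only [mul_zero]; linarith

/-- `φ` is approximable from above by positive log-concave sequences. -/
def LC (φ : ℕ → ℝ) : Prop := ∀ β : ℕ, ∀ ε > 0, ∃ ψ : ℕ → ℝ, (∀ k, 0 < ψ k) ∧
  (∀ k, ψ k * ψ (k + 2) ≤ ψ (k + 1) ^ 2) ∧ (∀ k, φ k ≤ ψ k) ∧ ψ β ≤ φ β + ε

theorem thq_zero {W : Type*} [Fintype W] (p : W → ℤ) : thq 0 p = if p = 0 then 1 else 0 := by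
  unfold thq
  split_ifs with h
  · subst h; simp
  · rw [zero_pow]
    intro h0
    apply h
    funext w
    have := (Finset.sum_eq_zero_iff.1 h0) w (mem_univ _)
    simpa using this

theorem lc_main {W E : Type} [Fintype W] [DecidableEq W] [Fintype E] [DecidableEq E]
    (a b : E → Option W) (τ : E → ℝ) (hτ : ∀ x, 0 ≤ τ x) (L : ℕ) (p : W → ℤ) (v : W) :
    LC (fun k => ∑ B : E → Fin (L + 1), (∏ x, τ x ^ (B x : ℕ)) *
      (if ∑ x, (B x : ℕ) • (bvec (b x) - bvec (a x)) = p + k • Pi.single v 1 then 1 else 0)) := by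
  intro β ε hε
  set cq : ℝ → (W → ℤ) → ℝ := fun q p => ∑ B : E → Fin (L + 1), (∏ x, τ x ^ (B x : ℕ)) *
      thq q (p - ∑ x, (B x : ℕ) • (bvec (b x) - bvec (a x))) with hcq
  have h0 : ∀ p, cq 0 p = ∑ B : E → Fin (L + 1), (∏ x, τ x ^ (B x : ℕ)) *
      (if ∑ x, (B x : ℕ) • (bvec (b x) - bvec (a x)) = p then 1 else 0) := by
    intro p
    simp only [hcq, thq_zero, sub_eq_zero]
    refine Fintype.sum_congr _ _ fun B => ?_
    congr 1
    simp only [eq_comm]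
  have hcont : Continuous fun q => cq q (p + β • Pi.single v 1) := by
    simp only [hcq, thq]
    fun_prop
  have hlim : ∀ᶠ q in nhds (0:ℝ), cq q (p + β • Pi.single v 1) <
      cq 0 (p + β • Pi.single v 1) + ε :=
    hcont.continuousAt.eventually_lt continuousAt_const (by linarith)
  have hlim2 : ∀ᶠ q in nhdsWithin (0:ℝ) (Set.Ioi 0), q < 1 :=
    (eventually_lt_nhds one_pos).filter_mono nhdsWithin_le_nhds
  obtain ⟨q, ⟨hq1, hq2⟩, hq3⟩ :=
    (((hlim.filter_mono nhdsWithin_le_nhds).and hlim2).and self_mem_nhdsWithin).exists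
  have hq3 : 0 < q := hq3
  have hcls := cls_sum (bvec (W := W)) (thq q) (thq_cls q hq3 hq2) L E a b τ hτ
  refine ⟨fun k => cq q (p + k • Pi.single v 1), fun k => hcls.1 _, fun k => ?_, fun k => ?_, ?_⟩
  · have h := (hcls.2 (p + k • Pi.single v 1)).2 (Pi.single none 1) (Pi.single (some v) 1)
      (by rw [MF_single_single]; exact hcls.1 _)
    simp only [MF_single_single] at h
    have hb0 : bvec (none : Option W) = 0 := rfl
    have hb1 : bvec (some v) = Pi.single v 1 := rfl
    rw [hb0, hb1, add_zero, add_zero] at h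
    have e1 : p + (k + 2) • Pi.single v (1:ℤ) = p + k • Pi.single v 1 + Pi.single v 1 +
      Pi.single v 1 := by rw [add_smul, two_smul]; abel
    have e2 : p + (k + 1) • Pi.single v (1:ℤ) = p + k • Pi.single v 1 + Pi.single v 1 := by
      rw [add_smul, one_smul]; abel
    beta_reduce
    rw [e1, e2]
    exact h
  · simp only [hcq]
    refine sum_le_sum fun B _ => mul_le_mul_of_nonneg_left ?_
      (prod_nonneg fun x _ => pow_nonneg (hτ x) _)
    split_ifs with h
    · rw [h]; simp [thq]
    · unfold thq; positivity
  · rw [h0] at hq1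
    exact hq1.le

theorem exists_ratio (ψ : ℕ → ℝ) (hp : ∀ k, 0 < ψ k)
    (hl : ∀ k, ψ k * ψ (k + 2) ≤ ψ (k + 1) ^ 2) (β : ℕ) :
    ∃ r > 0, ∀ k, ψ k * r ^ β ≤ ψ β * r ^ k := by
  have hanti : Antitone fun k => ψ (k + 1) / ψ k := by
    refine antitone_nat_of_succ_le fun k => ?_
    rw [div_le_div_iff₀ (hp _) (hp _)]
    have := hl k
    nlinarith
  set r := ψ (β + 1) / ψ β with hr
  have hr0 : 0 < r := div_pos (hp _) (hp _)
  refine ⟨r, hr0, fun k => ?_⟩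
  rcases le_total β k with h | h
  · induction k, h using Nat.le_induction with
    | base => exact le_rfl
    | succ k hk ih =>
      have h1 : ψ (k + 1) ≤ r * ψ k := by
        have := hanti hk
        simp only at this
        rwa [div_le_iff₀ (hp _)] at this
      calc ψ (k + 1) * r ^ β ≤ r * ψ k * r ^ β := by gcongr
        _ = r * (ψ k * r ^ β) := by ring
        _ ≤ r * (ψ β * r ^ k) := by gcongr
        _ = _ := by ring
  · induction h using Nat.decreasingInduction with
    | self => exact le_rfl
    | of_succ k hk ih =>
      have h1 : r * ψ k ≤ ψ (k + 1) := by
        have := hanti hk.le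
        simp only at this
        rwa [le_div_iff₀ (hp _)] at this
      have : r * (ψ k * r ^ β) ≤ r * (ψ β * r ^ k) := by
        calc r * (ψ k * r ^ β) = r * ψ k * r ^ β := by ring
          _ ≤ ψ (k + 1) * r ^ β := by gcongr
          _ ≤ ψ β * r ^ (k + 1) := ih
          _ = _ := by ring
      exact le_of_mul_le_mul_left this hr0

theorem ratio_sum (ψ : ℕ → ℝ) (β : ℕ) (r : ℝ) (hr : 0 < r) (h : ∀ k, ψ k * r ^ β ≤ ψ β * r ^ k)
    (hβ : 0 ≤ ψ β) (t : ℝ) (ht : 0 < t) (ht1 : t < 1) (L : ℕ) :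
    (∑ k ∈ range L, ψ k * (t / r) ^ k) * (r ^ β * (1 - t)) ≤ ψ β := by
  have h1 : ∀ k, ψ k * (t / r) ^ k * r ^ β ≤ ψ β * t ^ k := by
    intro k
    rw [div_pow]
    calc ψ k * (t ^ k / r ^ k) * r ^ β = (ψ k * r ^ β) * (t ^ k / r ^ k) := by ring
      _ ≤ (ψ β * r ^ k) * (t ^ k / r ^ k) := mul_le_mul_of_nonneg_right (h k) (by positivity)
      _ = _ := by field_simp
  have h2 : (∑ k ∈ range L, t ^ k) * (1 - t) ≤ 1 := by
    rw [geom_sum_mul_neg]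
    have : 0 ≤ t ^ L := by positivity
    linarith
  have h3 : (∑ k ∈ range L, ψ k * (t / r) ^ k) * (r ^ β * (1 - t)) =
      (∑ k ∈ range L, ψ k * (t / r) ^ k * r ^ β) * (1 - t) := by
    rw [← sum_mul]; ring
  have h4 : (∑ k ∈ range L, ψ k * (t / r) ^ k * r ^ β) * (1 - t) ≤
      (∑ k ∈ range L, ψ β * t ^ k) * (1 - t) :=
    mul_le_mul_of_nonneg_right (sum_le_sum fun k _ => h1 k) (by linarith)
  rw [h3]
  refine h4.trans ?_
  rw [← mul_sum, mul_assoc]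
  exact mul_le_of_le_one_right hβ h2

theorem entH_zero : entH 0 = 0 := by simp [entH]

theorem t_opt (C φ : ℝ) (β : ℕ) (h : ∀ t : ℝ, 0 < t → t < 1 → C * (t ^ β * (1 - t)) ≤ φ) :
    C ≤ φ * Real.exp (entH β) := by
  rcases Nat.eq_zero_or_pos β with rfl | hβ
  · simp only [Nat.cast_zero, entH_zero, Real.exp_zero, mul_one]
    simp only [pow_zero, one_mul] at h
    have hc : Filter.Tendsto (fun t : ℝ => C * (1 - t)) (nhdsWithin 0 (Set.Ioi 0))
        (nhds (C * (1 - 0))) := by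
      refine Filter.Tendsto.mono_left ?_ nhdsWithin_le_nhds
      exact (Continuous.tendsto (by fun_prop) 0)
    rw [sub_zero, mul_one] at hc
    refine le_of_tendsto hc ?_
    filter_upwards [self_mem_nhdsWithin, mem_nhdsWithin_of_mem_nhds (eventually_lt_nhds one_pos)]
      with t ht ht1
    exact h t ht ht1
  · have hb : (0:ℝ) < β := by exact_mod_cast hβ
    have h1 := h (β / (β + 1)) (by positivity) (by rw [div_lt_one (by positivity)]; linarith)
    have h2 : ((β:ℝ) / (β + 1)) ^ β * (1 - β / (β + 1)) * Real.exp (entH β) = 1 := by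
      have e1 : Real.exp (entH β) = ((β:ℝ) + 1) ^ (β + 1) / (β:ℝ) ^ β := by
        rw [entH, Real.exp_sub]
        congr 1
        · rw [mul_comm, Real.exp_mul, Real.exp_log (by positivity)]
          rw [← Real.rpow_natCast]; push_cast; rfl
        · rw [mul_comm, Real.exp_mul, Real.exp_log (by positivity)]
          rw [Real.rpow_natCast]
      rw [e1, div_pow, pow_succ]
      field_simp
      ring
    calc C = C * (((β:ℝ) / (β + 1)) ^ β * (1 - β / (β + 1)) * Real.exp (entH β)) := by
          rw [h2, mul_one]
      _ = C * (((β:ℝ) / (β + 1)) ^ β * (1 - β / (β + 1))) * Real.exp (entH β) := by ring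
      _ ≤ _ := by gcongr

theorem univ_bound (φ : ℕ → ℝ) (hφ : LC φ) (C : ℝ) (β L : ℕ)
    (h : ∀ x : ℝ, 0 < x → C * x ^ β ≤ ∑ k ∈ range L, φ k * x ^ k) :
    C ≤ φ β * Real.exp (entH β) := by
  refine t_opt _ _ _ fun t ht ht1 => ?_
  refine le_of_forall_pos_le_add fun ε hε => ?_
  obtain ⟨ψ, hp, hl, hle, hb⟩ := hφ β ε hε
  obtain ⟨r, hr, hrat⟩ := exists_ratio ψ hp hl β
  have h1 := ratio_sum ψ β r hr hrat (hp β).le t ht ht1 L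
  have h2 := h (t / r) (by positivity)
  have h3 : C * (t / r) ^ β ≤ ∑ k ∈ range L, ψ k * (t / r) ^ k := by
    refine h2.trans (sum_le_sum fun k _ => ?_)
    have := hle k
    gcongr
  have h4 : C * (t / r) ^ β * (r ^ β * (1 - t)) ≤ ψ β := by
    refine le_trans (mul_le_mul_of_nonneg_right h3 ?_) h1
    have : 0 < 1 - t := by linarith
    positivity
  have h5 : C * (t / r) ^ β * (r ^ β * (1 - t)) = C * (t ^ β * (1 - t)) := by
    rw [div_pow]; field_simp
  linarith

theorem gibbs (a t : ℝ) (ha : 0 ≤ a) (ht : 0 ≤ t) (ht1 : t < 1) (h0 : t = 0 → a = 0) :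
    t ^ a * Real.exp (entH a) ≤ 1 / (1 - t) := by
  rw [le_div_iff₀ (by linarith)]
  rcases ha.eq_or_lt with rfl | ha
  · simp only [entH_zero, Real.rpow_zero, Real.exp_zero]; linarith
  have ht : 0 < t := lt_of_le_of_ne ht fun h => ha.ne' (h0 h.symm)
  have h1t : 0 < 1 - t := by linarith
  rw [Real.rpow_def_of_pos ht, ← Real.exp_log h1t, ← Real.exp_add, ← Real.exp_add,
    Real.exp_le_one_iff, entH]
  have l1 := Real.log_le_sub_one_of_pos (x := t * (a + 1) / a) (by positivity)
  have l2 := Real.log_le_sub_one_of_pos (x := (1 - t) * (a + 1)) (by positivity)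
  rw [Real.log_div (by positivity) (by positivity), Real.log_mul (by positivity) (by positivity)]
    at l1
  rw [Real.log_mul (by positivity) (by positivity)] at l2
  have l3 := mul_le_mul_of_nonneg_left l1 ha.le
  have e : a * (t * (a + 1) / a - 1) = t * (a + 1) - a := by field_simp
  rw [e] at l3
  nlinarith

theorem box_sum {E : Type*} [Fintype E] [DecidableEq E] (L : ℕ) (S : Finset (E → ℕ))
    (hS : ∀ b ∈ S, ∀ x, b x ≤ L) (F : (E → ℕ) → ℝ) (P : (E → Fin (L + 1)) → Prop)
    [DecidablePred P] (hP : ∀ B, P B ↔ (fun x => (B x : ℕ)) ∈ S) :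
    ∑ B : E → Fin (L + 1), F (fun x => (B x : ℕ)) * (if P B then 1 else 0) = ∑ b ∈ S, F b := by
  simp only [mul_ite, mul_one, mul_zero]
  rw [← sum_filter]
  refine sum_nbij (fun B x => (B x : ℕ)) ?_ ?_ ?_ ?_
  · intro B hB
    simpa [hP] using hB
  · intro B _ B' _ h
    funext x
    exact Fin.ext (congrFun h x)
  · intro b hb
    refine ⟨fun x => ⟨b x, Nat.lt_succ_of_le (hS b hb x)⟩, ?_, rfl⟩
    simpa [hP] using hb
  · intro _ _; rfl

/-- Weighted complete homogeneous sums. -/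
noncomputable def hk {J : Type} [Fintype J] [DecidableEq J] (τ : J → ℝ) (k : ℕ) : ℝ :=
  ∑ b ∈ piAntidiag (univ : Finset J) k, ∏ j, τ j ^ b j

theorem hk_lc {J : Type} [Fintype J] [DecidableEq J] (τ : J → ℝ) (hτ : ∀ j, 0 ≤ τ j) (k : ℕ) :
    hk τ k * hk τ (k + 2) ≤ hk τ (k + 1) ^ 2 := by
  have hn : ∀ m, 0 ≤ hk τ m := fun m =>
    sum_nonneg fun b _ => prod_nonneg fun j _ => pow_nonneg (hτ j) _
  have key := lc_main (W := Unit) (E := J) (fun _ => none) (fun _ => some ()) τ hτ (k + 2) 0 ()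
  have hφ : ∀ m ≤ k + 2, (∑ B : J → Fin (k + 2 + 1), (∏ x, τ x ^ (B x : ℕ)) *
      (if ∑ x, (B x : ℕ) • (bvec (some ()) - bvec none) = (0 : Unit → ℤ) + m • Pi.single () 1
        then (1:ℝ) else 0)) = hk τ m := by
    intro m hm
    refine box_sum (k + 2) (piAntidiag univ m) ?_ (fun b => ∏ j, τ j ^ b j) _ ?_
    · intro b hb x
      rw [mem_piAntidiag] at hb
      have := single_le_sum (f := b) (fun i _ => Nat.zero_le _) (mem_univ x)
      exact (this.trans hb.1.le).trans hm
    · intro B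
      rw [mem_piAntidiag, funext_iff]
      simp only [bvec, sub_zero, Finset.sum_apply, Pi.smul_apply, Pi.single_eq_same, zero_add,
        smul_eq_mul, nsmul_eq_mul, mul_one, Pi.mul_apply, Pi.natCast_apply, mem_univ, implies_true, and_true]
      rw [← Nat.cast_sum]
      constructor
      · intro h; exact_mod_cast h ()
      · intro h _; exact_mod_cast h
  have h2 : ∀ ε > 0, hk τ k * hk τ (k + 2) ≤ (hk τ (k + 1) + ε) ^ 2 := by
    intro ε hε
    obtain ⟨ψ, hp, hl, hle, hb⟩ := key (k + 1) ε hε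
    beta_reduce at hle hb
    rw [hφ (k + 1) (by omega)] at hb
    have e0 := hle k
    rw [hφ k (by omega)] at e0
    have e2 := hle (k + 2)
    rw [hφ (k + 2) (by omega)] at e2
    calc hk τ k * hk τ (k + 2) ≤ ψ k * ψ (k + 2) := mul_le_mul e0 e2 (hn _) (hp _).le
      _ ≤ _ := hl k
      _ ≤ _ := pow_le_pow_left₀ (hp _).le hb 2
  have hc : Filter.Tendsto (fun ε : ℝ => (hk τ (k + 1) + ε) ^ 2) (nhdsWithin 0 (Set.Ioi 0))
      (nhds ((hk τ (k + 1) + 0) ^ 2)) := by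
    refine Filter.Tendsto.mono_left ?_ nhdsWithin_le_nhds
    exact (Continuous.tendsto (by fun_prop) 0)
  rw [add_zero] at hc
  refine ge_of_tendsto hc ?_
  filter_upwards [self_mem_nhdsWithin] with ε hε
  exact h2 ε hε

theorem hk_scale {J : Type} [Fintype J] [DecidableEq J] (τ : J → ℝ) (x : ℝ) (k : ℕ) :
    hk (fun j => x * τ j) k = hk τ k * x ^ k := by
  unfold hk
  rw [sum_mul]
  refine sum_congr rfl fun b hb => ?_
  rw [mem_piAntidiag] at hb
  simp only [mul_pow, prod_mul_distrib]
  rw [prod_pow_eq_pow_sum, hb.1, mul_comm]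

theorem hk_single_le {J : Type} [Fintype J] [DecidableEq J] (τ : J → ℝ) (hτ : ∀ j, 0 ≤ τ j)
    (k : ℕ) (j : J) : τ j ^ k ≤ hk τ k := by
  have h := single_le_sum (s := piAntidiag (univ : Finset J) k) (f := fun b => ∏ j, τ j ^ b j)
    (fun b _ => prod_nonneg fun j _ => pow_nonneg (hτ j) _)
    (a := Pi.single j k) (by rw [mem_piAntidiag]; simp)
  refine le_trans (le_of_eq ?_) h
  beta_reduce
  rw [prod_eq_single j]
  · simp
  · intro i _ hi; simp [hi]
  · simp

theorem prod_geom_le {J : Type} [Fintype J] [DecidableEq J] (z : J → ℝ) (hz : ∀ j, 0 ≤ z j)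
    (L : ℕ) : ∃ M, ∏ j, ∑ k ∈ range L, z j ^ k ≤ ∑ k ∈ range M, hk z k := by
  refine ⟨Fintype.card J * L + 1, ?_⟩
  rw [prod_univ_sum]
  rw [← sum_fiberwise_of_maps_to (t := range (Fintype.card J * L + 1)) (g := fun b => ∑ j, b j)]
  · refine sum_le_sum fun k _ => ?_
    refine sum_le_sum_of_subset_of_nonneg ?_ ?_
    · intro b hb
      rw [mem_filter] at hb
      rw [mem_piAntidiag]
      exact ⟨hb.2, by simp⟩
    · intro b _ _
      exact prod_nonneg fun j _ => pow_nonneg (hz j) _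
  · intro b hb
    rw [Fintype.mem_piFinset] at hb
    rw [mem_range, Nat.lt_succ_iff]
    calc ∑ j, b j ≤ ∑ j : J, L := sum_le_sum fun j _ => (mem_range.1 (hb j)).le
      _ = _ := by simp

theorem row_lemma {J : Type} [Fintype J] [DecidableEq J] (τ a : J → ℝ) (hτ : ∀ j, 0 ≤ τ j)
    (ha : ∀ j, 0 ≤ a j) (h0 : ∀ j, τ j = 0 → a j = 0) (α : ℕ) (hα : ∑ j, a j = α) :
    ∏ j, (τ j ^ a j * Real.exp (entH (a j))) ≤ hk τ α * Real.exp (entH α) := by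
  by_cases hall : ∀ j, τ j = 0
  · have ha0 : ∀ j, a j = 0 := fun j => h0 j (hall j)
    have : α = 0 := by
      have : (α:ℝ) = 0 := by rw [← hα]; simp [ha0]
      exact_mod_cast this
    subst this
    simp [ha0, entH_zero, hk]
  push Not at hall
  obtain ⟨j0, hj0⟩ := hall
  have hj0' : 0 < τ j0 := lt_of_le_of_ne (hτ j0) hj0.symm
  have hpos : ∀ k, 0 < hk τ k := fun k =>
    lt_of_lt_of_le (pow_pos hj0' k) (hk_single_le τ hτ k j0)
  obtain ⟨r, hr, hrat⟩ := exists_ratio (hk τ) hpos (hk_lc τ hτ) α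
  refine t_opt _ _ _ fun t ht ht1 => ?_
  have h1t : 0 < 1 - t := by linarith
  set x := t / r with hx
  have hx0 : 0 < x := div_pos ht hr
  set z : J → ℝ := fun j => x * τ j with hz
  have hz0 : ∀ j, 0 ≤ z j := fun j => mul_nonneg hx0.le (hτ j)
  have hbd : ∀ M, (∑ k ∈ range M, hk z k) * (r ^ α * (1 - t)) ≤ hk τ α := by
    intro M
    simp only [hz, hk_scale]
    exact ratio_sum (hk τ) α r hr hrat (hpos α).le t ht ht1 M
  have hrp : 0 < r ^ α * (1 - t) := by positivity
  have hz1 : ∀ j, z j < 1 := by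
    intro j
    by_contra hcon
    push Not at hcon
    obtain ⟨M, hM⟩ := exists_nat_gt (hk τ α / (r ^ α * (1 - t)))
    rw [div_lt_iff₀ hrp] at hM
    have h1 : (M:ℝ) ≤ ∑ k ∈ range M, hk z k := by
      calc (M:ℝ) = ∑ k ∈ range M, (1:ℝ) := by simp
        _ ≤ _ := sum_le_sum fun k _ => (one_le_pow₀ hcon).trans (hk_single_le z hz0 k j)
    have h2 := mul_le_mul_of_nonneg_right h1 hrp.le
    linarith [hbd M]
  have hlim : Filter.Tendsto (fun L => (∏ j, ∑ k ∈ range L, z j ^ k) * (r ^ α * (1 - t)))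
      Filter.atTop (nhds ((∏ j, (1 - z j)⁻¹) * (r ^ α * (1 - t)))) := by
    refine Filter.Tendsto.mul_const _ (tendsto_finset_prod _ fun j _ => ?_)
    exact (hasSum_geometric_of_lt_one (hz0 j) (hz1 j)).tendsto_sum_nat
  have hle : (∏ j, (1 - z j)⁻¹) * (r ^ α * (1 - t)) ≤ hk τ α := by
    refine le_of_tendsto' hlim fun L => ?_
    obtain ⟨M, hM⟩ := prod_geom_le z hz0 L
    exact (mul_le_mul_of_nonneg_right hM hrp.le).trans (hbd M)
  have hg : ∏ j, (z j ^ a j * Real.exp (entH (a j))) ≤ ∏ j, (1 - z j)⁻¹ := by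
    refine prod_le_prod (fun j _ => mul_nonneg (Real.rpow_nonneg (hz0 j) _) (Real.exp_nonneg _))
      fun j _ => ?_
    have := gibbs (a j) (z j) (ha j) (hz0 j) (hz1 j) fun h => h0 j (by
      simpa [hz, hx0.ne'] using h)
    rwa [one_div] at this
  have he : ∏ j, (z j ^ a j * Real.exp (entH (a j))) =
      x ^ α * ∏ j, (τ j ^ a j * Real.exp (entH (a j))) := by
    have : x ^ α = ∏ j, x ^ a j := by
      rw [← Real.rpow_natCast, ← hα, Real.rpow_sum_of_pos hx0]
    rw [this, ← prod_mul_distrib]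
    refine prod_congr rfl fun j _ => ?_
    simp only [hz]
    rw [Real.mul_rpow hx0.le (hτ j)]
    ring
  rw [he] at hg
  have h3 := (mul_le_mul_of_nonneg_right hg hrp.le).trans hle
  have h4 : x ^ α * (∏ j, (τ j ^ a j * Real.exp (entH (a j)))) * (r ^ α * (1 - t)) =
      (∏ j, (τ j ^ a j * Real.exp (entH (a j)))) * (t ^ α * (1 - t)) := by
    rw [hx, div_pow]; field_simp
  linarith

theorem bvec_sum_inl {I J : Type} [Fintype I] [DecidableEq I] [Fintype J] [DecidableEq J]
    (V : Finset J) (B : I × J → ℕ) (i : I) :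
    (∑ x : I × J, B x • (bvec (if x.2 ∈ V then some (Sum.inr x.2) else none) -
      bvec (some (Sum.inl x.1)) : I ⊕ J → ℤ)) (Sum.inl i) = -∑ j, (B (i, j) : ℤ) := by
  have h : ∀ x : I × J, bvec (if x.2 ∈ V then some (Sum.inr x.2 : I ⊕ J) else none) (Sum.inl i)
      = 0 := by
    intro x; split_ifs <;> simp [bvec]
  rw [Finset.sum_apply]
  simp only [Pi.smul_apply, Pi.sub_apply, h, zero_sub, smul_neg, sum_neg_distrib]
  rw [Fintype.sum_prod_type, neg_inj, Fintype.sum_eq_single i]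
  · simp [bvec]
  · intro i' hi'
    refine sum_eq_zero fun j _ => ?_
    simp [bvec, hi'.symm]

theorem bvec_sum_inr {I J : Type} [Fintype I] [DecidableEq I] [Fintype J] [DecidableEq J]
    (V : Finset J) (B : I × J → ℕ) (j : J) :
    (∑ x : I × J, B x • (bvec (if x.2 ∈ V then some (Sum.inr x.2) else none) -
      bvec (some (Sum.inl x.1)) : I ⊕ J → ℤ)) (Sum.inr j) =
      if j ∈ V then ∑ i, (B (i, j) : ℤ) else 0 := by
  have h : ∀ x : I × J, bvec (some (Sum.inl x.1 : I ⊕ J)) (Sum.inr j) = 0 := by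
    intro x; simp [bvec]
  rw [Finset.sum_apply]
  simp only [Pi.smul_apply, Pi.sub_apply, h, sub_zero]
  rw [Fintype.sum_prod_type_right, Fintype.sum_eq_single j]
  · split_ifs with hj <;> simp [bvec]
  · intro j' hj'
    refine sum_eq_zero fun i _ => ?_
    dsimp only
    split_ifs <;> simp [bvec, hj'.symm]

/-- Matrices with prescribed row sums, and prescribed column sums on `U`. -/
def MatU {I J : Type} [Fintype I] [DecidableEq I] [Fintype J] [DecidableEq J]
    (α : I → ℕ) (β : J → ℕ) (U : Finset J) : Finset (I → J → ℕ) :=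
  (Fintype.piFinset fun i => piAntidiag univ (α i)).filter fun B => ∀ j ∈ U, ∑ i, B i j = β j

theorem mem_MatU {I J : Type} [Fintype I] [DecidableEq I] [Fintype J] [DecidableEq J]
    (α : I → ℕ) (β : J → ℕ) (U : Finset J) (B : I → J → ℕ) :
    B ∈ MatU α β U ↔ (∀ i, ∑ j, B i j = α i) ∧ ∀ j ∈ U, ∑ i, B i j = β j := by
  simp [MatU, Fintype.mem_piFinset, mem_piAntidiag]

theorem col_lc {I J : Type} [Fintype I] [DecidableEq I] [Fintype J] [DecidableEq J]
    (α : I → ℕ) (β : J → ℕ) (U : Finset J) (v : J) (hv : v ∉ U) (τ : I → J → ℝ)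
    (hτ : ∀ i j, 0 ≤ τ i j) :
    LC fun k => ∑ B ∈ (MatU α β U).filter (fun B => ∑ i, B i v = k), ∏ i, ∏ j, τ i j ^ B i j := by
  have key := lc_main (W := I ⊕ J) (E := I × J) (fun x => some (Sum.inl x.1))
    (fun x => if x.2 ∈ insert v U then some (Sum.inr x.2) else none) (fun x => τ x.1 x.2)
    (fun x => hτ _ _) (∑ i, α i)
    (Sum.elim (fun i => -(α i : ℤ)) (fun j => if j ∈ U then (β j : ℤ) else 0)) (Sum.inr v)
  convert key using 2 with k
  symm
  have hb := box_sum (E := I × J) (∑ i, α i)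
    (((MatU α β U).filter (fun B => ∑ i, B i v = k)).map (Equiv.curry I J ℕ).symm.toEmbedding)
    (by
      intro b hb x
      rw [mem_map_equiv, mem_filter, mem_MatU] at hb
      have h1 := hb.1.1 x.1
      have h2 := single_le_sum (f := fun j => b (x.1, j)) (fun i _ => Nat.zero_le _)
        (mem_univ x.2)
      have h3 := single_le_sum (f := α) (fun i _ => Nat.zero_le _) (mem_univ x.1)
      exact (h2.trans h1.le).trans h3)
    (fun b => ∏ x, τ x.1 x.2 ^ b x)
    (fun B => ∑ x, (B x : ℕ) • (bvec (if x.2 ∈ insert v U then some (Sum.inr x.2) else none) -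
      bvec (some (Sum.inl x.1))) = (Sum.elim (fun i => -(α i : ℤ))
        (fun j => if j ∈ U then (β j : ℤ) else 0)) + k • Pi.single (Sum.inr v) 1)
    (by
      intro B
      rw [mem_map_equiv, mem_filter, mem_MatU, funext_iff, Sum.forall]
      simp only [bvec_sum_inl (insert v U) (fun x => (B x : ℕ)),
        bvec_sum_inr (insert v U) (fun x => (B x : ℕ))]
      simp only [Equiv.symm_symm, Equiv.curry_apply, Function.curry_apply, Pi.add_apply,
        Sum.elim_inl, Sum.elim_inr, Pi.smul_apply, mem_insert]
      constructor
      · rintro ⟨h1, h2⟩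
        refine ⟨⟨fun i => ?_, fun j hj => ?_⟩, ?_⟩
        · have := h1 i
          simp at this
          exact_mod_cast this
        · have := h2 j
          have hjv : j ≠ v := fun h => hv (h ▸ hj)
          simp [hj, hjv] at this
          exact_mod_cast this
        · have := h2 v
          simp [hv] at this
          exact_mod_cast this
      · rintro ⟨⟨h1, h2⟩, h3⟩
        refine ⟨fun i => ?_, fun j => ?_⟩
        · simp
          exact_mod_cast h1 i
        · by_cases hjv : j = v
          · subst hjv
            simp [hv]
            exact_mod_cast h3
          · by_cases hj : j ∈ U
            · simp [hj, hjv]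
              exact_mod_cast h2 j hj
            · simp [hj, hjv])
  rw [hb, sum_map]
  refine sum_congr rfl fun b _ => ?_
  rw [Fintype.prod_prod_type]
  rfl

theorem col_induct {I J : Type} [Fintype I] [DecidableEq I] [Fintype J] [DecidableEq J]
    (α : I → ℕ) (β : J → ℕ) (g a : I → J → ℝ) (hg : ∀ i j, g i j = 0 ∨ g i j = 1)
    (ha : ∀ i j, 0 ≤ a i j) (h0 : ∀ i j, g i j = 0 → a i j = 0)
    (hα : ∀ i, ∑ j, a i j = α i) (hβ : ∀ j, ∑ i, a i j = β j) (U : Finset J) :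
    ∀ y : J → ℝ, (∀ j, 0 < y j) →
      (∏ i, ∏ j, Real.exp (entH (a i j))) * ∏ j, y j ^ β j ≤
      (∑ B ∈ MatU α β U, ∏ i, ∏ j, (g i j * y j) ^ B i j) *
        ((∏ i, Real.exp (entH (α i))) * ∏ j ∈ U, Real.exp (entH (β j))) := by
  have hg0 : ∀ i j, 0 ≤ g i j := fun i j => by rcases hg i j with h | h <;> simp [h]
  induction U using Finset.induction_on with
  | empty =>
    intro y hy
    have e1 : MatU α β ∅ = Fintype.piFinset fun i => piAntidiag univ (α i) := by
      simp [MatU]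
    have e2 : (∑ B ∈ MatU α β ∅, ∏ i, ∏ j, (g i j * y j) ^ B i j) =
        ∏ i, hk (fun j => g i j * y j) (α i) := by
      rw [e1]
      unfold hk
      rw [prod_univ_sum]
    rw [e2, prod_empty, mul_one, ← prod_mul_distrib]
    have e3 : (∏ i, ∏ j, Real.exp (entH (a i j))) * ∏ j, y j ^ β j =
        ∏ i, ∏ j, ((g i j * y j) ^ a i j * Real.exp (entH (a i j))) := by
      simp only [prod_mul_distrib]
      rw [mul_comm]
      congr 1
      rw [prod_comm]
      refine prod_congr rfl fun j _ => ?_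
      rw [← Real.rpow_natCast, ← hβ, Real.rpow_sum_of_pos (hy j)]
      refine prod_congr rfl fun i _ => ?_
      rcases hg i j with h | h
      · rw [h0 i j h]; simp
      · rw [h, one_mul]
    rw [e3]
    refine prod_le_prod (fun i _ => prod_nonneg fun j _ =>
      mul_nonneg (Real.rpow_nonneg (mul_nonneg (hg0 i j) (hy j).le) _) (Real.exp_nonneg _))
      fun i _ => ?_
    refine row_lemma _ _ (fun j => mul_nonneg (hg0 i j) (hy j).le) (ha i) ?_ (α i) (hα i)
    intro j hj
    refine h0 i j ?_
    simpa [(hy j).ne'] using hj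
  | insert v U hv ih =>
    intro y hy
    set D := (∏ i, Real.exp (entH (α i))) * ∏ j ∈ U, Real.exp (entH (β j)) with hD
    have hDp : 0 < D := by positivity
    set X := ∏ i, ∏ j, Real.exp (entH (a i j)) with hX
    have hlc := col_lc α β U v hv (fun i j => g i j * y j)
      (fun i j => mul_nonneg (hg0 i j) (hy j).le)
    have hmain := univ_bound _ hlc (X * (∏ j, y j ^ β j) / D) (β v) (∑ i, α i + 1) (by
      intro x hx
      have h1 := ih (Function.update y v (x * y v)) (by
        intro j
        by_cases hj : j = v
        · subst hj; simp only [Function.update_self]; exact mul_pos hx (hy j)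
        · simp only [Function.update_of_ne hj]; exact hy j)
      have hup : ∀ j, Function.update y v (x * y v) j = (if j = v then x else 1) * y j := by
        intro j
        by_cases hj : j = v
        · subst hj; simp
        · simp [hj]
      have e1 : ∏ j, Function.update y v (x * y v) j ^ β j = x ^ β v * ∏ j, y j ^ β j := by
        simp only [hup, mul_pow, prod_mul_distrib]
        congr 1
        rw [Fintype.prod_eq_single v]
        · simp
        · intro j hj; simp [hj]
      have e2 : ∀ B : I → J → ℕ, ∏ i, ∏ j, (g i j * Function.update y v (x * y v) j) ^ B i j =
          (∏ i, ∏ j, (g i j * y j) ^ B i j) * x ^ (∑ i, B i v) := by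
        intro B
        rw [← prod_pow_eq_pow_sum, ← prod_mul_distrib]
        refine prod_congr rfl fun i _ => ?_
        have : x ^ B i v = ∏ j, (if j = v then x else 1) ^ B i j := by
          rw [Fintype.prod_eq_single v]
          · simp
          · intro j hj; simp [hj]
        rw [this, ← prod_mul_distrib]
        refine prod_congr rfl fun j _ => ?_
        rw [hup, ← mul_pow]
        congr 1
        ring
      rw [e1] at h1
      simp only [e2] at h1
      rw [← sum_fiberwise_of_maps_to (t := range (∑ i, α i + 1)) (g := fun B => ∑ i, B i v)] at h1
      · rw [div_mul_eq_mul_div, div_le_iff₀ hDp]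
        refine le_trans (le_of_eq (by ring)) (h1.trans (le_of_eq ?_))
        congr 1
        refine sum_congr rfl fun k _ => ?_
        rw [sum_mul]
        refine sum_congr rfl fun B hB => ?_
        rw [mem_filter] at hB
        rw [hB.2]
      · intro B hB
        rw [mem_MatU] at hB
        rw [mem_range, Nat.lt_succ_iff]
        refine sum_le_sum fun i _ => ?_
        rw [← hB.1 i]
        exact single_le_sum (f := B i) (fun i _ => Nat.zero_le _) (mem_univ v))
    have e4 : (MatU α β U).filter (fun B => ∑ i, B i v = β v) = MatU α β (insert v U) := by
      ext B
      rw [mem_filter, mem_MatU, mem_MatU, forall_mem_insert]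
      tauto
    beta_reduce at hmain
    rw [e4, div_le_iff₀ hDp] at hmain
    refine hmain.trans (le_of_eq ?_)
    rw [prod_insert hv, hD]
    ring

theorem count_lower {I J : Type} [Fintype I] [DecidableEq I] [Fintype J] [DecidableEq J]
    (α : I → ℕ) (β : J → ℕ) (G : I → J → Prop) [∀ i j, Decidable (G i j)] (a : I → J → ℝ)
    (ha : ∀ i j, 0 ≤ a i j) (h0 : ∀ i j, ¬ G i j → a i j = 0)
    (hα : ∀ i, ∑ j, a i j = α i) (hβ : ∀ j, ∑ i, a i j = β j) (v : J) :
    (∏ i, ∏ j, Real.exp (entH (a i j))) * Real.exp (entH (β v)) ≤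
      (((MatU α β univ).filter fun B => ∀ i j, ¬ G i j → B i j = 0).card : ℝ) *
        ((∏ i, Real.exp (entH (α i))) * ∏ j, Real.exp (entH (β j))) := by
  have h := col_induct α β (fun i j => if G i j then 1 else 0) a
    (fun i j => by by_cases h : G i j <;> simp [h]) ha
    (fun i j hij => h0 i j (by by_contra hc; simp [hc] at hij)) hα hβ (univ.erase v)
    (fun _ => 1) (fun _ => one_pos)
  simp only [one_pow, prod_const_one, mul_one] at h
  have hab : ∑ i, α i = ∑ j, β j := by
    have : (∑ i, (α i : ℝ)) = ∑ j, (β j : ℝ) := by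
      simp only [← hα, ← hβ]
      exact sum_comm
    exact_mod_cast this
  have e1 : MatU α β (univ.erase v) = MatU α β univ := by
    ext B
    rw [mem_MatU, mem_MatU]
    refine and_congr_right fun h1 => ⟨fun h2 j _ => ?_, fun h2 j _ => h2 j (mem_univ _)⟩
    by_cases hj : j = v
    · subst hj
      have h3 : ∑ k, ∑ i, B i k = ∑ k, β k := by
        rw [sum_comm, ← hab]
        exact sum_congr rfl fun i _ => h1 i
      rw [← add_sum_erase _ _ (mem_univ j), ← add_sum_erase _ β (mem_univ j)] at h3
      rw [sum_congr rfl h2] at h3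
      exact Nat.add_right_cancel h3
    · exact h2 j (by simp [hj])
  have e2 : ∑ B ∈ MatU α β (univ.erase v), ∏ i, ∏ j, (if G i j then (1:ℝ) else 0) ^ B i j =
      ((MatU α β univ).filter fun B => ∀ i j, ¬ G i j → B i j = 0).card := by
    rw [e1, card_filter, Nat.cast_sum]
    refine sum_congr rfl fun B _ => ?_
    split_ifs with hB
    · rw [Nat.cast_one]
      refine prod_eq_one fun i _ => prod_eq_one fun j _ => ?_
      by_cases hG : G i j
      · simp [hG]
      · simp [hB i j hG]
    · push Not at hB
      obtain ⟨i, j, hG, hB⟩ := hB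
      rw [Nat.cast_zero]
      refine prod_eq_zero (mem_univ i) (prod_eq_zero (mem_univ j) ?_)
      simp [hG, hB]
  rw [e2] at h
  refine (mul_le_mul_of_nonneg_right h (Real.exp_nonneg (entH (β v)))).trans (le_of_eq ?_)
  rw [← prod_erase_mul univ _ (mem_univ v)]
  ring

theorem count_upper {E : Type} [Fintype E] [DecidableEq E] (S : Finset (E → ℕ))
    (hS : S.Nonempty) :
    (S.card : ℝ) ≤ Real.exp (∑ e, entH ((∑ B ∈ S, (B e : ℝ)) / S.card)) := by
  have hK : (0:ℝ) < S.card := by exact_mod_cast hS.card_pos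
  set K : ℝ := (S.card : ℝ) with hKdef
  set m : E → ℝ := fun e => (∑ B ∈ S, (B e : ℝ)) / K with hm
  have hm0 : ∀ e, 0 ≤ m e := fun e => div_nonneg (sum_nonneg fun B _ => Nat.cast_nonneg _) hK.le
  set t : E → ℝ := fun e => m e / (1 + m e) with ht
  have ht0 : ∀ e, 0 ≤ t e := fun e => div_nonneg (hm0 e) (by linarith [hm0 e])
  have ht1 : ∀ e, 1 - t e = 1 / (1 + m e) := by
    intro e
    have : 1 + m e ≠ 0 := by linarith [hm0 e]
    simp only [ht]; field_simp; ring
  have ht1' : ∀ e, 0 < 1 - t e := fun e => by rw [ht1]; have := hm0 e; positivity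
  have htB : ∀ e, t e = 0 → ∀ B ∈ S, B e = 0 := by
    intro e he B hB
    have h1 : 1 + m e ≠ 0 := by linarith [hm0 e]
    have h2 : m e = 0 := by simpa [ht, h1] using he
    have h3 : ∑ B ∈ S, (B e : ℝ) = 0 := by simpa [hm, hK.ne'] using h2
    have := (sum_eq_zero_iff_of_nonneg (fun B _ => Nat.cast_nonneg _)).1 h3 B hB
    exact_mod_cast this
  set q : (E → ℕ) → ℝ := fun B => ∏ e, ((1 - t e) * t e ^ B e) with hq
  have hfac : ∀ B ∈ S, ∀ e, 0 < t e ^ B e := by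
    intro B hB e
    rcases (ht0 e).eq_or_lt with h | h
    · rw [htB e h.symm B hB]; simp
    · positivity
  have hqpos : ∀ B ∈ S, 0 < q B := fun B hB =>
    prod_pos fun e _ => mul_pos (ht1' e) (hfac B hB e)
  have hlog : ∀ B ∈ S, Real.log (q B) = ∑ e, (Real.log (1 - t e) + B e * Real.log (t e)) := by
    intro B hB
    simp only [hq]
    rw [Real.log_prod fun e _ => (mul_pos (ht1' e) (hfac B hB e)).ne']
    refine sum_congr rfl fun e _ => ?_
    rw [Real.log_mul (ht1' e).ne' (hfac B hB e).ne', Real.log_pow]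
  have hsum : ∑ B ∈ S, q B ≤ 1 := by
    set L := ∑ B ∈ S, ∑ e, B e + 1 with hL
    have hsub : S ⊆ Fintype.piFinset fun _ : E => range L := by
      intro B hB
      rw [Fintype.mem_piFinset]
      intro e
      rw [mem_range, hL, Nat.lt_succ_iff]
      exact (single_le_sum (f := B) (fun i _ => Nat.zero_le _) (mem_univ e)).trans
        (single_le_sum (f := fun B : E → ℕ => ∑ e, B e) (fun i _ => Nat.zero_le _) hB)
    calc ∑ B ∈ S, q B ≤ ∑ B ∈ Fintype.piFinset fun _ : E => range L, q B :=
          sum_le_sum_of_subset_of_nonneg hsub fun B _ _ =>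
            prod_nonneg fun e _ => mul_nonneg (ht1' e).le (pow_nonneg (ht0 e) _)
      _ = ∏ e, ∑ k ∈ range L, ((1 - t e) * t e ^ k) := by
          rw [prod_univ_sum]
      _ ≤ ∏ e : E, (1:ℝ) := by
          refine prod_le_prod (fun e _ => sum_nonneg fun k _ =>
            mul_nonneg (ht1' e).le (pow_nonneg (ht0 e) _)) fun e _ => ?_
          rw [← mul_sum, mul_comm, geom_sum_mul_neg]
          linarith [pow_nonneg (ht0 e) L]
      _ = 1 := by simp
  have h1 : ∀ B ∈ S, 1 + Real.log K + Real.log (q B) ≤ K * q B := by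
    intro B hB
    have := Real.log_le_sub_one_of_pos (mul_pos hK (hqpos B hB))
    rw [Real.log_mul hK.ne' (hqpos B hB).ne'] at this
    linarith
  have h2 := sum_le_sum h1
  rw [← mul_sum, sum_add_distrib, sum_const, nsmul_eq_mul, ← hKdef] at h2
  have h3 : K * ∑ B ∈ S, q B ≤ K := mul_le_of_le_one_right hK.le hsum
  have h4 : ∑ B ∈ S, Real.log (q B) = -(K * ∑ e, entH (m e)) := by
    rw [sum_congr rfl hlog, sum_comm, mul_sum, ← sum_neg_distrib]
    refine sum_congr rfl fun e _ => ?_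
    rw [sum_add_distrib, sum_const, ← sum_mul, nsmul_eq_mul, ← hKdef]
    have h5 : ∑ B ∈ S, (B e : ℝ) = K * m e := by simp only [hm]; field_simp
    have h6 : 1 + m e ≠ 0 := by linarith [hm0 e]
    rw [h5, ht1 e, one_div, Real.log_inv, entH]
    rcases (hm0 e).eq_or_lt with h | h
    · rw [← h]; simp
    · simp only [ht]
      rw [Real.log_div h.ne' h6, add_comm (m e) 1]
      ring
  have h7 : K * Real.log K ≤ K * ∑ e, entH (m e) := by nlinarith
  have h8 := le_of_mul_le_mul_left h7 hK
  calc K = Real.exp (Real.log K) := (Real.exp_log hK).symm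
    _ ≤ _ := Real.exp_le_exp.2 h8

/-- Sum of the netflows strictly before `v`. -/
def preS {n : ℕ} (N : Fin (n + 1) → ℝ) (v : Fin (n + 1)) : ℝ := ∑ i, if i < v then N i else 0

/-- The slack at a vertex. -/
def slk {n : ℕ} (N : Fin (n + 1) → ℝ) (f : Fin (n + 1) → Fin (n + 1) → ℝ) (v : Fin (n + 1)) : ℝ :=
  ∑ i, if i < v then N i - f i v else 0

theorem slk_eq {n : ℕ} (N : Fin (n + 1) → ℝ) (f : Fin (n + 1) → Fin (n + 1) → ℝ)
    (v : Fin (n + 1)) : slk N f v = preS N v - ∑ i, if i < v then f i v else 0 := by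
  rw [slk, preS, ← sum_sub_distrib]
  refine sum_congr rfl fun i _ => ?_
  split_ifs <;> simp

theorem preS_zero {n : ℕ} (N : Fin (n + 1) → ℝ) : preS N 0 = 0 := by simp [preS]

theorem preS_succ {n : ℕ} (N : Fin (n + 1) → ℝ) (i : Fin n) :
    preS N i.succ = preS N i.castSucc + N i.castSucc := by
  have h : N i.castSucc = ∑ k, if k = i.castSucc then N k else 0 := by simp
  rw [h, preS, preS, ← sum_add_distrib]
  refine sum_congr rfl fun k _ => ?_
  have e1 : k < i.succ ↔ (k:ℕ) < i + 1 := by rw [Fin.lt_def]; simp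
  have e2 : k < i.castSucc ↔ (k:ℕ) < i := by rw [Fin.lt_def]; simp
  have e3 : k = i.castSucc ↔ (k:ℕ) = i := by rw [Fin.ext_iff]; simp
  simp only [e1, e2, e3]
  by_cases h1 : (k:ℕ) < i
  · rw [if_pos (by omega), if_pos h1, if_neg (by omega), add_zero]
  · by_cases h2 : (k:ℕ) = i
    · rw [if_pos (by omega), if_neg h1, if_pos h2, zero_add]
    · rw [if_neg (by omega), if_neg h1, if_neg h2, zero_add]

theorem preS_last {n : ℕ} (N : Fin (n + 1) → ℝ) (hN : ∑ i, N i = 0) :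
    preS N (Fin.last n) + N (Fin.last n) = 0 := by
  rw [← hN, preS, Fin.sum_univ_castSucc, Fin.sum_univ_castSucc]
  simp [Fin.castSucc_lt_last]

theorem sum_sub_row {n : ℕ} (i : Fin n) (x : Fin n → ℝ) (y : ℝ)
    (h0 : (i:ℕ) = 0 → y = 0) (h : ∀ c : Fin n, (i:ℕ) = c + 1 → x c = y) :
    (∑ c : Fin n, if (i:ℕ) = c + 1 then x c else 0) = y := by
  by_cases hi : (i:ℕ) = 0
  · rw [h0 hi]
    refine sum_eq_zero fun c _ => if_neg (by omega)
  · have hc : (i:ℕ) - 1 < n := by omega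
    rw [Fintype.sum_eq_single ⟨(i:ℕ) - 1, hc⟩]
    · have : (i:ℕ) = ((⟨(i:ℕ) - 1, hc⟩ : Fin n) : ℕ) + 1 := by simp; omega
      rw [if_pos this, h _ this]
    · intro c hne
      refine if_neg fun h => hne ?_
      ext; simp; omega

theorem sum_sub_col {n : ℕ} (c : Fin n) (x : Fin n → ℝ) (y : ℝ)
    (h0 : (c:ℕ) + 1 = n → y = 0) (h : ∀ i : Fin n, (i:ℕ) = c + 1 → x i = y) :
    (∑ i : Fin n, if (i:ℕ) = c + 1 then x i else 0) = y := by
  by_cases hi : (c:ℕ) + 1 = n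
  · rw [h0 hi]
    refine sum_eq_zero fun i _ => if_neg (by omega)
  · have hc : (c:ℕ) + 1 < n := by omega
    rw [Fintype.sum_eq_single ⟨(c:ℕ) + 1, hc⟩]
    · rw [if_pos rfl, h _ rfl]
    · intro i hne
      refine if_neg fun h => hne ?_
      ext; simp; omega

theorem out_sum {n : ℕ} {R : Type*} [AddCommMonoid R] (f : Fin (n + 1) → Fin (n + 1) → R)
    (i : Fin n) : (∑ j, if i.castSucc < j then f i.castSucc j else 0) =
      ∑ c : Fin n, if i ≤ c then f i.castSucc c.succ else 0 := by
  rw [Fin.sum_univ_succ, if_neg (by simp), zero_add]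
  simp only [Fin.castSucc_lt_succ_iff]

theorem out_last {n : ℕ} {R : Type*} [AddCommMonoid R] (f : Fin (n + 1) → Fin (n + 1) → R) :
    (∑ j, if Fin.last n < j then f (Fin.last n) j else 0) = 0 :=
  sum_eq_zero fun j _ => if_neg (not_lt.2 (Fin.le_last j))

theorem in_sum {n : ℕ} {R : Type*} [AddCommMonoid R] (f : Fin (n + 1) → Fin (n + 1) → R)
    (c : Fin n) : (∑ k, if k < c.succ then f k c.succ else 0) =
      ∑ i : Fin n, if i ≤ c then f i.castSucc c.succ else 0 := by
  rw [Fin.sum_univ_castSucc, if_neg (not_lt.2 (Fin.le_last _)), add_zero]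
  simp only [Fin.castSucc_lt_succ_iff]

theorem in_zero {n : ℕ} {R : Type*} [AddCommMonoid R] (f : Fin (n + 1) → Fin (n + 1) → R) :
    (∑ k, if k < 0 then f k 0 else 0) = 0 :=
  sum_eq_zero fun j _ => if_neg (by simp)

/-- Contingency-type tables associated with the netflow vector. -/
def RCT (n : ℕ) (N : Fin (n + 1) → ℝ) (a : Fin n → Fin n → ℝ) : Prop :=
  (∀ i c, 0 ≤ a i c) ∧ (∀ i c : Fin n, ¬ (i:ℕ) ≤ c + 1 → a i c = 0) ∧
  (∀ i : Fin n, ∑ c, a i c = preS N i.succ) ∧ (∀ c : Fin n, ∑ i, a i c = preS N c.succ)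

/-- Flow to matrix. -/
def psiM {n : ℕ} (N : Fin (n + 1) → ℝ) (f : Fin (n + 1) → Fin (n + 1) → ℝ) (i c : Fin n) : ℝ :=
  (if i ≤ c then f i.castSucc c.succ else 0) + if (i:ℕ) = c + 1 then slk N f i.castSucc else 0

/-- Matrix to flow. -/
def phiM {n : ℕ} {R : Type*} [Zero R] (a : Fin n → Fin n → R) (i j : Fin (n + 1)) : R :=
  if h : i < j then a ⟨i, by have := j.2; rw [Fin.lt_def] at h; omega⟩
    ⟨j - 1, by have := j.2; rw [Fin.lt_def] at h; omega⟩ else 0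

theorem phiM_cs {n : ℕ} {R : Type*} [Zero R] (a : Fin n → Fin n → R) (i c : Fin n) :
    phiM a i.castSucc c.succ = if i ≤ c then a i c else 0 := by
  unfold phiM
  split_ifs with h1 h2 h2
  · rfl
  · exact absurd (Fin.castSucc_lt_succ_iff.1 h1) h2
  · exact absurd (Fin.castSucc_lt_succ_iff.2 h2) h1
  · rfl

theorem phiM_not {n : ℕ} {R : Type*} [Zero R] (a : Fin n → Fin n → R) (i j : Fin (n + 1))
    (h : ¬ i < j) : phiM a i j = 0 := dif_neg h

theorem exists_cs {n : ℕ} (i j : Fin (n + 1)) (h : i < j) :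
    ∃ i' c' : Fin n, i = i'.castSucc ∧ j = c'.succ ∧ i' ≤ c' := by
  have hj := j.2
  rw [Fin.lt_def] at h
  refine ⟨⟨i, by omega⟩, ⟨j - 1, by omega⟩, rfl, ?_, ?_⟩
  · ext; simp; omega
  · rw [Fin.le_def]; simp; omega

theorem slk_nonneg {n : ℕ} (N : Fin (n + 1) → ℝ) (f : Fin (n + 1) → Fin (n + 1) → ℝ)
    (hf : f ∈ FlowPolytope n N) (v : Fin (n + 1)) : 0 ≤ slk N f v := by
  obtain ⟨h1, h2, h3⟩ := hf
  set T : Fin (n + 1) → Fin (n + 1) → ℝ := fun i k =>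
    if i < k then f i k * ((if i < v then 1 else 0) - (if k < v then 1 else 0)) else 0 with hT
  have hT0 : ∀ i k, 0 ≤ T i k := by
    intro i k
    simp only [hT]
    split_ifs with a b c c
    · simp
    · simp [h1 i k a]
    · exact absurd (a.trans c) b
    · simp
    · exact le_rfl
  have hpre : preS N v = ∑ i, ∑ k, T i k := by
    have e1 : ∀ i, (if i < v then N i else 0) =
        (∑ k, if i < k then f i k * (if i < v then 1 else 0) else 0) -
        ∑ k, if k < i then f k i * (if i < v then 1 else 0) else 0 := by
      intro i
      rw [← h3 i]
      split_ifs <;> simp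
    rw [preS, sum_congr rfl fun i _ => e1 i, sum_sub_distrib]
    rw [sum_comm (f := fun i k => if k < i then f k i * (if i < v then 1 else 0) else 0)]
    rw [← sum_sub_distrib]
    refine sum_congr rfl fun i _ => ?_
    rw [← sum_sub_distrib]
    refine sum_congr rfl fun k _ => ?_
    simp only [hT]
    by_cases h : i < k
    · simp only [if_pos h]; ring
    · simp only [if_neg h]; ring
  rw [slk_eq, hpre, sub_nonneg]
  refine sum_le_sum fun i _ => ?_
  refine le_trans (le_of_eq ?_) (single_le_sum (f := T i) (fun k _ => hT0 i k) (mem_univ v))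
  simp only [hT]
  by_cases h : i < v <;> simp [h]

theorem slk_zero {n : ℕ} (N : Fin (n + 1) → ℝ) (f : Fin (n + 1) → Fin (n + 1) → ℝ) :
    slk N f 0 = 0 := by simp [slk]

theorem out_slk {n : ℕ} (N : Fin (n + 1) → ℝ) (f : Fin (n + 1) → Fin (n + 1) → ℝ)
    (hf : f ∈ FlowPolytope n N) (v : Fin (n + 1)) :
    (∑ j, if v < j then f v j else 0) + slk N f v = preS N v + N v := by
  have := hf.2.2 v
  rw [slk_eq]
  linarith

theorem slk_last {n : ℕ} (N : Fin (n + 1) → ℝ) (hN : ∑ i, N i = 0)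
    (f : Fin (n + 1) → Fin (n + 1) → ℝ)
    (hf : f ∈ FlowPolytope n N) : slk N f (Fin.last n) = 0 := by
  have := out_slk N f hf (Fin.last n)
  rw [out_last, preS_last N hN, zero_add] at this
  exact this

theorem psi_RCT {n : ℕ} (N : Fin (n + 1) → ℝ) (hN : ∑ i, N i = 0)
    (f : Fin (n + 1) → Fin (n + 1) → ℝ)
    (hf : f ∈ FlowPolytope n N) : RCT n N (psiM N f) := by
  refine ⟨fun i c => ?_, fun i c h => ?_, fun i => ?_, fun c => ?_⟩
  · unfold psiM
    refine add_nonneg ?_ ?_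
    · split_ifs with h
      · exact hf.1 _ _ (Fin.castSucc_lt_succ_iff.2 h)
      · exact le_rfl
    · split_ifs with h
      · exact slk_nonneg N f hf _
      · exact le_rfl
  · unfold psiM
    rw [if_neg (by rw [Fin.le_def]; omega), if_neg (by omega), add_zero]
  · simp only [psiM]
    rw [sum_add_distrib, ← out_sum, sum_sub_row i _ (slk N f i.castSucc) _ (fun _ _ => rfl),
      out_slk N f hf, preS_succ]
    intro h
    have : i.castSucc = 0 := by ext; simpa using h
    rw [this, slk_zero]
  · simp only [psiM]
    rw [sum_add_distrib, ← in_sum, sum_sub_col c _ (slk N f c.succ), slk_eq]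
    · ring
    · intro h
      have : c.succ = Fin.last n := by ext; simpa using h
      rw [this, slk_last N hN f hf]
    · intro i h
      congr 1
      ext; simpa using h

theorem psi_entropy {n : ℕ} (N : Fin (n + 1) → ℝ) (f : Fin (n + 1) → Fin (n + 1) → ℝ) :
    flowEntropy n N f = ∑ i, ∑ c, entH (psiM N f i c) := by
  have h1 : ∀ i c : Fin n, entH (psiM N f i c) = (if i ≤ c then entH (f i.castSucc c.succ) else 0)
      + if (i:ℕ) = c + 1 then entH (slk N f i.castSucc) else 0 := by
    intro i c
    unfold psiM
    by_cases h : i ≤ c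
    · have h' : ¬ (i:ℕ) = c + 1 := by rw [Fin.le_def] at h; omega
      simp [h, h']
    · by_cases h' : (i:ℕ) = c + 1
      · simp [h, h']
      · simp [h, h', entH_zero]
  simp only [h1, sum_add_distrib]
  unfold flowEntropy
  congr 1
  · rw [Fin.sum_univ_castSucc]
    rw [out_last (fun i j => entH (f i j)), add_zero]
    refine sum_congr rfl fun i _ => ?_
    exact out_sum (fun i j => entH (f i j)) i
  · rw [Fin.sum_univ_castSucc, if_neg (by simp), add_zero]
    refine sum_congr rfl fun i _ => ?_
    symm
    refine sum_sub_row i _ _ (fun h => if_neg (by simp [h])) ?_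
    intro c hc
    rw [if_pos (by simp; omega)]
    rfl

/-- The subdiagonal entry attached to a vertex. -/
def subD {n : ℕ} (a : Fin n → Fin n → ℝ) (v : Fin (n + 1)) : ℝ :=
  if h : 0 < (v:ℕ) ∧ (v:ℕ) < n then a ⟨v, h.2⟩ ⟨v - 1, by omega⟩ else 0

theorem phi_out {n : ℕ} (N : Fin (n + 1) → ℝ) (hN : ∑ i, N i = 0) (a : Fin n → Fin n → ℝ)
    (ha : RCT n N a) (v : Fin (n + 1)) :
    (∑ j, if v < j then phiM a v j else 0) = preS N v + N v - subD a v := by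
  induction v using Fin.lastCases with
  | last => rw [out_last, preS_last N hN]; simp [subD]
  | cast i =>
    rw [out_sum, ← preS_succ, ← ha.2.2.1 i]
    have h1 : (∑ c : Fin n, if (i:ℕ) = c + 1 then a i c else 0) = subD a i.castSucc := by
      refine sum_sub_row i _ _ ?_ ?_
      · intro h; simp [subD, h]
      · intro c hc
        have : 0 < (i.castSucc : ℕ) ∧ (i.castSucc : ℕ) < n := by simp; omega
        rw [subD, dif_pos this]
        congr 1
        ext; simp; omega
    rw [← h1, ← sum_sub_distrib]
    refine sum_congr rfl fun c _ => ?_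
    rw [phiM_cs]
    by_cases h : i ≤ c
    · have h' : ¬ (i:ℕ) = c + 1 := by rw [Fin.le_def] at h; omega
      simp [h, h']
    · by_cases h' : (i:ℕ) = c + 1
      · simp [h, h']
      · have := ha.2.1 i c (by rw [Fin.le_def] at h; omega)
        simp [h, this]

theorem phi_in {n : ℕ} (N : Fin (n + 1) → ℝ) (a : Fin n → Fin n → ℝ)
    (ha : RCT n N a) (v : Fin (n + 1)) :
    (∑ k, if k < v then phiM a k v else 0) = preS N v - subD a v := by
  induction v using Fin.cases with
  | zero => rw [in_zero, preS_zero]; simp [subD]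
  | succ c =>
    rw [in_sum, ← ha.2.2.2 c]
    have h1 : (∑ i : Fin n, if (i:ℕ) = c + 1 then a i c else 0) = subD a c.succ := by
      refine sum_sub_col c _ _ ?_ ?_
      · intro h; simp [subD, h]
      · intro i hi
        have : 0 < (c.succ : ℕ) ∧ (c.succ : ℕ) < n := by simp; omega
        rw [subD, dif_pos this]
        congr 1
        ext; simp; omega
    rw [← h1, ← sum_sub_distrib]
    refine sum_congr rfl fun i _ => ?_
    rw [phiM_cs]
    by_cases h : i ≤ c
    · have h' : ¬ (i:ℕ) = c + 1 := by rw [Fin.le_def] at h; omega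
      simp [h, h']
    · by_cases h' : (i:ℕ) = c + 1
      · simp [h, h']
      · have := ha.2.1 i c (by rw [Fin.le_def] at h; omega)
        simp [h, this]

theorem phi_FP {n : ℕ} (N : Fin (n + 1) → ℝ) (hN : ∑ i, N i = 0) (a : Fin n → Fin n → ℝ)
    (ha : RCT n N a) : phiM a ∈ FlowPolytope n N := by
  refine ⟨fun i j h => ?_, fun i j h => phiM_not a i j h, fun v => ?_⟩
  · unfold phiM
    rw [dif_pos h]
    exact ha.1 _ _
  · rw [phi_out N hN a ha, phi_in N a ha]; ring

theorem psi_phi {n : ℕ} (N : Fin (n + 1) → ℝ) (a : Fin n → Fin n → ℝ)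
    (ha : RCT n N a) : psiM N (phiM a) = a := by
  funext i c
  unfold psiM
  rw [slk_eq, phi_in N a ha, sub_sub_cancel, phiM_cs]
  by_cases h : i ≤ c
  · have h' : ¬ (i:ℕ) = c + 1 := by rw [Fin.le_def] at h; omega
    simp [h, h']
  · by_cases h' : (i:ℕ) = c + 1
    · have : 0 < (i.castSucc : ℕ) ∧ (i.castSucc : ℕ) < n := by simp; omega
      rw [subD, dif_pos this, if_neg h, if_pos h', zero_add]
      congr 1
      ext; simp; omega
    · have := ha.2.1 i c (by rw [Fin.le_def] at h; omega)
      simp [h, h', this]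

theorem phi_psi {n : ℕ} (N : Fin (n + 1) → ℝ) (f : Fin (n + 1) → Fin (n + 1) → ℝ)
    (hf : f ∈ FlowPolytope n N) : phiM (psiM N f) = f := by
  funext i j
  by_cases h : i < j
  · obtain ⟨i', c', rfl, rfl, h'⟩ := exists_cs i j h
    rw [phiM_cs, if_pos h']
    unfold psiM
    have h'' : ¬ (i':ℕ) = c' + 1 := by rw [Fin.le_def] at h'; omega
    rw [if_pos h', if_neg h'', add_zero]
  · rw [phiM_not _ _ _ h, hf.2.1 i j h]

theorem sPartial_preS {n : ℕ} (N : Fin (n + 1) → ℤ) (k : Fin n) :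
    ((sPartial n N k : ℤ) : ℝ) = preS (fun i => (N i : ℝ)) k.succ := by
  unfold sPartial preS
  push_cast
  refine sum_congr rfl fun i _ => ?_
  have : i < k.succ ↔ (i:ℕ) ≤ k := by rw [Fin.lt_def]; simp [Nat.lt_succ_iff]
  simp only [this]

theorem intFlow_iff {n : ℕ} (N : Fin (n + 1) → ℤ) (f : Fin (n + 1) → Fin (n + 1) → ℕ) :
    IsIntFlow n N f ↔ (fun i j => (f i j : ℝ)) ∈ FlowPolytope n fun i => (N i : ℝ) := by
  constructor
  · rintro ⟨h1, h2⟩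
    refine ⟨fun i j _ => Nat.cast_nonneg _, fun i j h => by simp [h1 i j h], fun i => ?_⟩
    beta_reduce
    rw [← h2 i]
    push_cast
    rfl
  · rintro ⟨_, h1, h2⟩
    refine ⟨fun i j h => Nat.cast_eq_zero.1 (h1 i j h), fun i => ?_⟩
    have := h2 i
    beta_reduce at this
    rw [← Int.cast_inj (α := ℝ), ← this]
    push_cast
    rfl

theorem phi_cast {n : ℕ} (B : Fin n → Fin n → ℕ) :
    (fun i j => ((phiM B i j : ℕ) : ℝ)) = phiM fun i c => (B i c : ℝ) := by
  funext i j
  unfold phiM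
  split_ifs <;> simp

/-- The finite set of integer tables. -/
def CTab (n : ℕ) (N : Fin (n + 1) → ℤ) : Finset (Fin n → Fin n → ℕ) :=
  (MatU (fun i : Fin n => (sPartial n N i).toNat) (fun i : Fin n => (sPartial n N i).toNat)
    univ).filter fun B => ∀ i c : Fin n, ¬ (i:ℕ) ≤ c + 1 → B i c = 0

theorem mem_CTab {n : ℕ} (N : Fin (n + 1) → ℤ) (hs : ∀ i : Fin n, 0 ≤ sPartial n N i)
    (B : Fin n → Fin n → ℕ) :
    B ∈ CTab n N ↔ RCT n (fun i => (N i : ℝ)) fun i c => (B i c : ℝ) := by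
  have hc : ∀ i : Fin n, (((sPartial n N i).toNat : ℕ) : ℝ) =
      preS (fun i => (N i : ℝ)) i.succ := by
    intro i
    rw [← sPartial_preS]
    exact_mod_cast congrArg (Int.cast (R := ℝ)) (Int.toNat_of_nonneg (hs i))
  rw [CTab, mem_filter, mem_MatU]
  constructor
  · rintro ⟨⟨h1, h2⟩, h3⟩
    refine ⟨fun i c => Nat.cast_nonneg _, fun i c h => by simp [h3 i c h], fun i => ?_, fun c => ?_⟩
    · rw [← hc, ← h1 i]; push_cast; rfl
    · rw [← hc, ← h2 c (mem_univ _)]; push_cast; rfl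
  · rintro ⟨_, h1, h2, h3⟩
    refine ⟨⟨fun i => ?_, fun c _ => ?_⟩, fun i c h => Nat.cast_eq_zero.1 (h1 i c h)⟩
    · have := h2 i
      beta_reduce at this
      rw [← hc] at this
      exact_mod_cast this
    · have := h3 c
      beta_reduce at this
      rw [← hc] at this
      exact_mod_cast this

theorem Kn_eq {n : ℕ} (N : Fin (n + 1) → ℤ) (hs : ∀ i : Fin n, 0 ≤ sPartial n N i)
    (hN : ∑ i, N i = 0) : Kn n N = (CTab n N).card := by
  have hN' : ∑ i, (N i : ℝ) = 0 := by exact_mod_cast hN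
  have hcard : Nat.card {B // B ∈ CTab n N} = (CTab n N).card := by simp
  rw [Kn, ← hcard]
  symm
  refine Nat.card_congr (Equiv.ofBijective
    (fun B => ⟨phiM B.1, ?_⟩) ⟨?_, ?_⟩)
  · have hB := (mem_CTab N hs B.1).1 B.2
    rw [intFlow_iff, phi_cast]
    exact phi_FP _ hN' _ hB
  · intro B B' h
    have h1 := congrArg Subtype.val h
    dsimp only at h1
    have hB := psi_phi _ _ ((mem_CTab N hs B.1).1 B.2)
    have hB' := psi_phi _ _ ((mem_CTab N hs B'.1).1 B'.2)
    rw [← phi_cast, h1, phi_cast, hB'] at hB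
    ext i c
    have := congrFun (congrFun hB i) c
    exact_mod_cast this.symm
  · rintro ⟨f, hf⟩
    rw [intFlow_iff] at hf
    have hex : ∀ i c : Fin n, ∃ k : ℕ, (k:ℝ) =
        psiM (fun i => (N i : ℝ)) (fun i j => (f i j : ℝ)) i c := by
      intro i c
      have h0 := (psi_RCT _ hN' _ hf).1 i c
      have : ∃ z : ℤ, (z:ℝ) = psiM (fun i => (N i : ℝ)) (fun i j => (f i j : ℝ)) i c := by
        refine ⟨(if i ≤ c then (f i.castSucc c.succ : ℤ) else 0) +
          if (i:ℕ) = c + 1 then ∑ k, if k < i.castSucc then N k - f k i.castSucc else 0 else 0, ?_⟩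
        unfold psiM slk
        push_cast
        rfl
      obtain ⟨z, hz⟩ := this
      rw [← hz] at h0 ⊢
      have hz0 : 0 ≤ z := by exact_mod_cast h0
      exact ⟨z.toNat, by exact_mod_cast congrArg (Int.cast (R := ℝ)) (Int.toNat_of_nonneg hz0)⟩
    choose B hB using hex
    have hB' : (fun i c => (B i c : ℝ)) =
        psiM (fun i => (N i : ℝ)) (fun i j => (f i j : ℝ)) := by
      funext i c; exact hB i c
    refine ⟨⟨B, ?_⟩, ?_⟩
    · rw [mem_CTab N hs, hB']
      exact psi_RCT _ hN' _ hf
    · ext i j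
      have h2 := phi_psi _ _ hf
      rw [← hB', ← phi_cast] at h2
      have := congrFun (congrFun h2 i) j
      exact_mod_cast this

theorem mean_RCT {n : ℕ} (N : Fin (n + 1) → ℝ) (S : Finset (Fin n → Fin n → ℕ))
    (hS : S.Nonempty) (h : ∀ B ∈ S, RCT n N fun i c => (B i c : ℝ)) :
    RCT n N fun i c => (∑ B ∈ S, (B i c : ℝ)) / S.card := by
  have hK : (S.card : ℝ) ≠ 0 := by exact_mod_cast hS.card_pos.ne'
  refine ⟨fun i c => div_nonneg (sum_nonneg fun B _ => Nat.cast_nonneg _) (Nat.cast_nonneg _),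
    fun i c hic => ?_, fun i => ?_, fun c => ?_⟩
  · beta_reduce
    rw [sum_eq_zero fun B hB => (h B hB).2.1 i c hic, zero_div]
  · rw [← sum_div, sum_comm, sum_congr rfl fun B hB => (h B hB).2.2.1 i, sum_const,
      nsmul_eq_mul]
    field_simp
  · rw [← sum_div, sum_comm, sum_congr rfl fun B hB => (h B hB).2.2.2 c, sum_const,
      nsmul_eq_mul]
    field_simp

theorem kostant_aux (n : ℕ) (hn : 1 ≤ n) (N : Fin (n + 1) → ℤ)
    (hsum : ∑ i, N i = 0)
    (hne : (FlowPolytope n fun i => (N i : ℝ)).Nonempty) :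
    sSup ((fun f => Real.exp (flowEntropy n (fun i => (N i : ℝ)) f)) ''
        FlowPolytope n fun i => (N i : ℝ)) ≥ (Kn n N : ℝ) ∧
    (Kn n N : ℝ) ≥
      (⨆ k : Fin n, Real.exp (entH ((sPartial n N k : ℤ) : ℝ))) /
        (∏ k ∈ Finset.range n, Real.exp (entH ((sPartial n N k : ℤ) : ℝ))) ^ 2 *
        sSup ((fun f => Real.exp (flowEntropy n (fun i => (N i : ℝ)) f)) ''
          FlowPolytope n fun i => (N i : ℝ)) := by
  have hN' : ∑ i, (N i : ℝ) = 0 := by exact_mod_cast hsum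
  have hs : ∀ i : Fin n, 0 ≤ sPartial n N i := by
    intro i
    obtain ⟨f, hf⟩ := hne
    have h := psi_RCT _ hN' _ hf
    have h1 := h.2.2.1 i
    rw [← sPartial_preS] at h1
    have h2 : 0 ≤ ∑ c, psiM (fun i => (N i : ℝ)) f i c := sum_nonneg fun c _ => h.1 i c
    rw [h1] at h2
    exact_mod_cast h2
  have hc : ∀ i : Fin n, (((sPartial n N i).toNat : ℕ) : ℝ) = ((sPartial n N i : ℤ) : ℝ) := by
    intro i
    exact_mod_cast congrArg (Int.cast (R := ℝ)) (Int.toNat_of_nonneg (hs i))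
  rw [Kn_eq N hs hsum]
  set P := ∏ k ∈ Finset.range n, Real.exp (entH ((sPartial n N k : ℤ) : ℝ)) with hP
  have hPpos : 0 < P := prod_pos fun k _ => Real.exp_pos _
  have hP' : ∏ k : Fin n, Real.exp (entH (((sPartial n N k).toNat : ℕ) : ℝ)) = P := by
    rw [hP, ← Fin.prod_univ_eq_prod_range
      (fun k => Real.exp (entH ((sPartial n N k : ℤ) : ℝ)))]
    exact prod_congr rfl fun k _ => by rw [hc]
  have hlow : ∀ f ∈ FlowPolytope n (fun i => (N i : ℝ)), ∀ k : Fin n,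
      Real.exp (flowEntropy n (fun i => (N i : ℝ)) f) *
        Real.exp (entH ((sPartial n N k : ℤ) : ℝ)) ≤ ((CTab n N).card : ℝ) * P ^ 2 := by
    intro f hf k
    have h := psi_RCT _ hN' _ hf
    have h1 := count_lower (fun i : Fin n => (sPartial n N i).toNat)
      (fun i : Fin n => (sPartial n N i).toNat) (fun i c => (i:ℕ) ≤ c + 1)
      (psiM (fun i => (N i : ℝ)) f) h.1 h.2.1
      (fun i => by rw [h.2.2.1 i, hc, sPartial_preS])
      (fun i => by rw [h.2.2.2 i, hc, sPartial_preS]) k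
    rw [psi_entropy, Real.exp_sum, ← hc, sq, ← hP']
    simp only [Real.exp_sum]
    rw [hP'] at h1 ⊢
    unfold CTab
    convert h1
  have hbdd : BddAbove ((fun f => Real.exp (flowEntropy n (fun i => (N i : ℝ)) f)) ''
        FlowPolytope n fun i => (N i : ℝ)) := by
    refine ⟨((CTab n N).card : ℝ) * P ^ 2 / Real.exp (entH ((sPartial n N (⟨0, hn⟩ : Fin n) : ℤ) : ℝ)), ?_⟩
    rintro _ ⟨f, hf, rfl⟩
    rw [le_div_iff₀ (Real.exp_pos _)]
    exact hlow f hf ⟨0, hn⟩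
  constructor
  · rcases (CTab n N).eq_empty_or_nonempty with h | h
    · rw [h]
      simp only [card_empty, Nat.cast_zero, ge_iff_le]
      refine Real.sSup_nonneg ?_
      rintro _ ⟨f, _, rfl⟩
      exact (Real.exp_pos _).le
    · have hR := mean_RCT _ _ h fun B hB => (mem_CTab N hs B).1 hB
      have hF := phi_FP _ hN' _ hR
      refine le_trans ?_ (le_csSup hbdd ⟨_, hF, rfl⟩)
      beta_reduce
      rw [psi_entropy, psi_phi _ _ hR]
      have hu := count_upper ((CTab n N).map (Equiv.curry (Fin n) (Fin n) ℕ).symm.toEmbedding)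
        (by simpa using h)
      rw [card_map, Fintype.sum_prod_type] at hu
      simp only [sum_map] at hu
      exact hu
  · have : Nonempty (Fin n) := ⟨⟨0, hn⟩⟩
    obtain ⟨k, hk⟩ := exists_eq_ciSup_of_finite
      (f := fun k : Fin n => Real.exp (entH ((sPartial n N k : ℤ) : ℝ)))
    rw [← hk, ge_iff_le, div_mul_eq_mul_div, div_le_iff₀ (by positivity), mul_comm,
      ← le_div_iff₀ (Real.exp_pos _)]
    refine csSup_le (hne.image _) ?_
    rintro _ ⟨f, hf, rfl⟩
    rw [le_div_iff₀ (Real.exp_pos _)]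
    exact hlow f hf k

/-- **Theorem (flow version of the capacity bound).**
If the flow polytope `F_n(N)` is nonempty, then
`sup_{f ∈ F_n(N)} e^{H(f)} ≥ K_n(N) ≥
  (max_k e^{h(s_k)}) / (∏_k e^{h(s_k)})² · sup_{f ∈ F_n(N)} e^{H(f)}`. -/
theorem kostant_capacity_bounds (n : ℕ) (hn : 1 ≤ n) (N : Fin (n + 1) → ℤ)
    (hsum : ∑ i, N i = 0)
    (hne : (FlowPolytope n fun i => (N i : ℝ)).Nonempty) :
    sSup ((fun f => Real.exp (flowEntropy n (fun i => (N i : ℝ)) f)) ''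
        FlowPolytope n fun i => (N i : ℝ)) ≥ (Kn n N : ℝ) ∧
    (Kn n N : ℝ) ≥
      (⨆ k : Fin n, Real.exp (entH ((sPartial n N k : ℤ) : ℝ))) /
        (∏ k ∈ Finset.range n, Real.exp (entH ((sPartial n N k : ℤ) : ℝ))) ^ 2 *
        sSup ((fun f => Real.exp (flowEntropy n (fun i => (N i : ℝ)) f)) ''
          FlowPolytope n fun i => (N i : ℝ)) :=
  kostant_aux n hn N hsum hne
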